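/- Let k ≥ 2 and let G be a finite 2-connected simple graph of order n ≥ 4 with minimum degree δ(G) ≥ k. Then G is k-color connectable and cc_k(G) = k. -/

import Mathlib

open SimpleGraph

/-- `c` is a `k`-color connecting edge-coloring of `G`: between every pair of distinct
vertices there is a path whose edges use at least `k` different colors. -/
def SimpleGraph.IsKColorConnecting {V : Type*} (G : SimpleGraph V) (k : ℕ)
    (c : Sym2 V → ℕ) : Prop :=
  ∀ u v : V, u ≠ v → ∃ p : G.Walk u v, p.IsPath ∧ k ≤ (p.edges.map c).toFinset.card

/-- `G` is `k`-color connectable: it admits a `k`-color connecting coloring. -/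
def SimpleGraph.KColorConnectable {V : Type*} (G : SimpleGraph V) (k : ℕ) : Prop :=
  ∃ c : Sym2 V → ℕ, G.IsKColorConnecting k c

/-- The `k`-color connection number `cc_k(G)`: the minimum number of colors used on the
edges of `G` by a `k`-color connecting coloring. -/
noncomputable def SimpleGraph.ccConn {V : Type*} (G : SimpleGraph V) (k : ℕ) : ℕ :=
  sInf {n : ℕ | ∃ c : Sym2 V → ℕ, G.IsKColorConnecting k c ∧ (c '' G.edgeSet).ncard = n}

/-- A graph is 2-connected if it has at least 3 vertices, is connected, and remains
connected after deleting any single vertex. -/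
def SimpleGraph.IsTwoConnected {V : Type*} (G : SimpleGraph V) : Prop :=
  3 ≤ Nat.card V ∧ G.Connected ∧ ∀ v : V, (G.induce {v}ᶜ).Connected


section HPsec
variable {V : Type*} {G : SimpleGraph V}

/-- There is a path from `u` to `v` with vertex set `S` whose edges contain `E`. -/
def HP (G : SimpleGraph V) (u v : V) (S : Set V) (E : Set (Sym2 V)) : Prop :=
  ∃ p : G.Walk u v, p.IsPath ∧ (∀ x, x ∈ p.support ↔ x ∈ S) ∧ ∀ e ∈ E, e ∈ p.edges

theorem HP.single (u : V) : HP G u u {u} ∅ :=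
  ⟨Walk.nil, by simp, by simp, by simp⟩

theorem HP.left_mem {u v : V} {S : Set V} {E : Set (Sym2 V)} (h : HP G u v S E) : u ∈ S := by
  obtain ⟨p, _, h2, _⟩ := h
  exact (h2 u).1 p.start_mem_support

theorem HP.right_mem {u v : V} {S : Set V} {E : Set (Sym2 V)} (h : HP G u v S E) : v ∈ S := by
  obtain ⟨p, _, h2, _⟩ := h
  exact (h2 v).1 p.end_mem_support

theorem HP.symm {u v : V} {S : Set V} {E : Set (Sym2 V)} (h : HP G u v S E) : HP G v u S E := by
  obtain ⟨p, h1, h2, h3⟩ := h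
  exact ⟨p.reverse, h1.reverse, by simpa using h2, by simpa using h3⟩

theorem HP.mono {u v : V} {S S' : Set V} {E E' : Set (Sym2 V)} (h : HP G u v S E)
    (hS : S = S') (hE : E' ⊆ E) : HP G u v S' E' := by
  subst hS
  obtain ⟨p, h1, h2, h3⟩ := h
  exact ⟨p, h1, h2, fun e he => h3 e (hE he)⟩

theorem HP.joinV {u y w : V} {S S' : Set V} {E E' : Set (Sym2 V)} (h : HP G u y S E)
    (h' : HP G y w S' E') (hd : ∀ x ∈ S, x ∈ S' → x = y) : HP G u w (S ∪ S') (E ∪ E') := by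
  obtain ⟨p, h1, h2, h3⟩ := h
  obtain ⟨q, g1, g2, g3⟩ := h'
  refine ⟨p.append q, ?_, ?_, ?_⟩
  · rw [Walk.isPath_def, Walk.support_append, List.nodup_append]
    refine ⟨h1.support_nodup, g1.support_nodup.tail, ?_⟩
    intro a ha b hb hab
    subst hab
    have hb' : a ∈ q.support := List.mem_of_mem_tail hb
    have := hd a ((h2 a).1 ha) ((g2 a).1 hb')
    subst this
    have hn := g1.support_nodup
    rw [← Walk.cons_tail_support] at hn
    exact (List.nodup_cons.1 hn).1 hb
  · intro x
    rw [Walk.mem_support_append_iff, h2, g2]; rfl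
  · intro e he
    rw [Walk.edges_append, List.mem_append]
    rcases he with he | he
    · exact Or.inl (h3 e he)
    · exact Or.inr (g3 e he)

theorem HP.edge {u v : V} (h : G.Adj u v) : HP G u v {u, v} {s(u, v)} :=
  ⟨Walk.cons h Walk.nil, by simp [h.ne], by simp, by simp⟩

theorem HP.joinE {u v v' w : V} {S S' : Set V} {E E' : Set (Sym2 V)} (h : HP G u v S E)
    (ha : G.Adj v v') (h' : HP G v' w S' E') (hd : ∀ x ∈ S, x ∉ S') :
    HP G u w (S ∪ S') (E ∪ E' ∪ {s(v, v')}) := by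
  have h1 : HP G u v' (S ∪ {v, v'}) (E ∪ {s(v, v')}) := by
    apply h.joinV (HP.edge ha)
    rintro x hx (rfl | rfl)
    · rfl
    · exact absurd h'.left_mem (hd _ hx)
  have h2 := h1.joinV h' (by
    rintro x (hx | rfl | rfl) hx'
    · exact absurd hx' (hd _ hx)
    · exact absurd hx' (hd _ h.right_mem)
    · rfl)
  refine h2.mono ?_ ?_
  · have := h.right_mem
    have := h'.left_mem
    ext x; simp only [Set.mem_union, Set.mem_insert_iff, Set.mem_singleton_iff]
    constructor
    · rintro ((h | rfl | rfl) | h) <;> tauto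
    · tauto
  · intro e; simp only [Set.mem_union]; tauto

theorem HP.split {u v y : V} {S : Set V} {E : Set (Sym2 V)} (h : HP G u v S E) (hy : y ∈ S) :
    ∃ S1 S2 E1 E2, HP G u y S1 E1 ∧ HP G y v S2 E2 ∧ S1 ∪ S2 = S ∧
      (∀ x ∈ S1, x ∈ S2 → x = y) ∧ E ⊆ E1 ∪ E2 := by
  classical
  obtain ⟨p, h1, h2, h3⟩ := h
  have hy' := (h2 y).2 hy
  refine ⟨{x | x ∈ (p.takeUntil y hy').support}, {x | x ∈ (p.dropUntil y hy').support},
    {e | e ∈ (p.takeUntil y hy').edges}, {e | e ∈ (p.dropUntil y hy').edges}, ?_, ?_, ?_, ?_, ?_⟩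
  · exact ⟨p.takeUntil y hy', h1.takeUntil hy', fun _ => Iff.rfl, fun _ h => h⟩
  · exact ⟨p.dropUntil y hy', h1.dropUntil hy', fun _ => Iff.rfl, fun _ h => h⟩
  · ext x
    rw [← h2]
    conv_rhs => rw [← p.take_spec hy']
    rw [Walk.mem_support_append_iff]; rfl
  · intro x hx hx'
    have hn := h1.support_nodup
    rw [← p.take_spec hy', Walk.support_append, List.nodup_append] at hn
    by_contra hne
    have : x ∈ (p.dropUntil y hy').support.tail := by
      have : x ∈ (p.dropUntil y hy').support := hx'
      rw [← Walk.cons_tail_support] at this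
      rcases List.mem_cons.1 this with h | h
      · exact absurd h hne
      · exact h
    exact hn.2.2 x hx x this rfl
  · intro e he
    have := h3 e he
    rw [← p.take_spec hy', Walk.edges_append, List.mem_append] at this
    exact this

theorem HP.cons_cases {u v : V} {S : Set V} {E : Set (Sym2 V)} (h : HP G u v S E) (hne : u ≠ v) :
    ∃ w, G.Adj u w ∧ w ∈ S ∧ ∃ E', HP G w v (S \ {u}) E' ∧ E ⊆ E' ∪ {s(u, w)} := by
  obtain ⟨p, h1, h2, h3⟩ := h
  cases p with
  | nil => exact absurd rfl hne
  | @cons _ w _ ha p =>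
    rw [Walk.cons_isPath_iff] at h1
    refine ⟨w, ha, (h2 w).1 (by simp), {e | e ∈ p.edges}, ⟨p, h1.1, ?_, fun _ h => h⟩, ?_⟩
    · intro x
      rw [Set.mem_sdiff, ← h2, Set.mem_singleton_iff, Walk.support_cons, List.mem_cons]
      constructor
      · intro hx
        exact ⟨Or.inr hx, fun h => h1.2 (h ▸ hx)⟩
      · tauto
    · intro e he
      have := h3 e he
      rw [Walk.edges_cons, List.mem_cons] at this
      simp only [Set.mem_union, Set.mem_singleton_iff, Set.mem_ofPred_eq]; tauto

theorem HP.splitE {u v x y : V} {S : Set V} {E : Set (Sym2 V)} (h : HP G u v S E)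
    (hxy : s(x, y) ∈ E) : ∃ a b S1 S2 E1 E2, s(a, b) = s(x, y) ∧ HP G u a S1 E1 ∧ HP G b v S2 E2 ∧
      S1 ∪ S2 = S ∧ (∀ z ∈ S1, z ∉ S2) ∧ E ⊆ E1 ∪ E2 ∪ {s(x, y)} := by
  obtain ⟨p, h1, h2, h3⟩ := h
  have hp := h3 _ hxy
  suffices H : ∀ (u v : V) (p : G.Walk u v), p.IsPath → s(x, y) ∈ p.edges →
      ∃ a b S1 S2 E1 E2, s(a, b) = s(x, y) ∧ HP G u a S1 E1 ∧ HP G b v S2 E2 ∧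
      S1 ∪ S2 = {z | z ∈ p.support} ∧ (∀ z ∈ S1, z ∉ S2) ∧
      {e | e ∈ p.edges} ⊆ E1 ∪ E2 ∪ {s(x, y)} by
    obtain ⟨a, b, S1, S2, E1, E2, g1, g2, g3, g4, g5, g6⟩ := H u v p h1 hp
    refine ⟨a, b, S1, S2, E1, E2, g1, g2, g3, ?_, g5, fun e he => g6 (h3 e he)⟩
    rw [g4]; ext z; exact h2 z
  clear! u v
  intro u v p hp he
  induction p with
  | nil => simp at he
  | @cons u w v ha p ih =>
    rw [Walk.cons_isPath_iff] at hp
    rw [Walk.edges_cons, List.mem_cons] at he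
    rcases he with he | he
    · refine ⟨u, w, {u}, {z | z ∈ p.support}, ∅, {e | e ∈ p.edges}, he.symm, HP.single u,
        ⟨p, hp.1, fun _ => Iff.rfl, fun _ h => h⟩, ?_, ?_, ?_⟩
      · ext z; simp
      · rintro z rfl; exact hp.2
      · intro e he'
        simp only [Walk.edges_cons, List.mem_cons, Set.mem_ofPred_eq] at he'
        simp only [Set.mem_union, Set.mem_singleton_iff, Set.mem_ofPred_eq, he]; tauto
    · obtain ⟨a, b, S1, S2, E1, E2, g1, g2, g3, g4, g5, g6⟩ := ih hp.1 he
      have hu : u ∉ S1 ∪ S2 := by rw [g4]; exact hp.2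
      refine ⟨a, b, {u} ∪ S1, S2, ∅ ∪ E1 ∪ {s(u, w)}, E2, g1, (HP.single u).joinE ha g2 ?_, g3,
        ?_, ?_, ?_⟩
      · rintro z rfl hz; exact hu (Or.inl hz)
      · rw [Set.union_assoc, g4]; ext z; simp
      · rintro z (rfl | hz) hz'
        · exact hu (Or.inr hz')
        · exact g5 z hz hz'
      · intro e he'
        simp only [Walk.edges_cons, List.mem_cons, Set.mem_ofPred_eq] at he'
        rcases he' with rfl | he'
        · simp
        · have := g6 he'
          simp only [Set.mem_union, Set.mem_singleton_iff] at this ⊢; tauto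

theorem HP.firstHit {u v y0 : V} {S : Set V} {E : Set (Sym2 V)} (h : HP G u v S E) (X : Set V)
    (hy0 : y0 ∈ S) (hX : y0 ∈ X) :
    ∃ y S1 S2 E1 E2, y ∈ X ∧ HP G u y S1 E1 ∧ HP G y v S2 E2 ∧ S1 ∪ S2 = S ∧
      (∀ x ∈ S1, x ∈ S2 → x = y) ∧ (∀ x ∈ S1, x ∈ X → x = y) ∧ E ⊆ E1 ∪ E2 := by
  obtain ⟨p, h1, h2, h3⟩ := h
  suffices H : ∀ (u v : V) (p : G.Walk u v), p.IsPath → y0 ∈ p.support →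
      ∃ y S1 S2 E1 E2, y ∈ X ∧ HP G u y S1 E1 ∧ HP G y v S2 E2 ∧ S1 ∪ S2 = {z | z ∈ p.support} ∧
      (∀ x ∈ S1, x ∈ S2 → x = y) ∧ (∀ x ∈ S1, x ∈ X → x = y) ∧ {e | e ∈ p.edges} ⊆ E1 ∪ E2 by
    obtain ⟨y, S1, S2, E1, E2, g1, g2, g3, g4, g5, g6, g7⟩ := H u v p h1 ((h2 _).2 hy0)
    refine ⟨y, S1, S2, E1, E2, g1, g2, g3, ?_, g5, g6, fun e he => g7 (h3 e he)⟩
    rw [g4]; ext z; exact h2 z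
  clear! u v
  intro u v p hp he
  induction p with
  | @nil u =>
    simp at he; subst he
    exact ⟨y0, {y0}, {y0}, ∅, ∅, hX, HP.single _, HP.single _, by simp, by simp, by simp, by simp⟩
  | @cons u w v ha p ih =>
    by_cases hu : u ∈ X
    · exact ⟨u, {u}, {z | z ∈ (Walk.cons ha p).support}, ∅, {e | e ∈ (Walk.cons ha p).edges}, hu, HP.single _, ⟨Walk.cons ha p, hp, fun _ => Iff.rfl, fun _ h => h⟩,
        by ext z; simp, by simp, by simp, by intro e he; right; exact he⟩
    rw [Walk.cons_isPath_iff] at hp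
    have hy : y0 ∈ p.support := by
      rw [Walk.support_cons, List.mem_cons] at he
      rcases he with rfl | he
      · exact absurd hX hu
      · exact he
    obtain ⟨y, S1, S2, E1, E2, g1, g2, g3, g4, g5, g6, g7⟩ := ih hp.1 hy
    have hu' : u ∉ S1 ∪ S2 := by rw [g4]; exact hp.2
    refine ⟨y, {u} ∪ S1, S2, ∅ ∪ E1 ∪ {s(u, w)}, E2, g1, (HP.single u).joinE ha g2 ?_, g3,
        ?_, ?_, ?_, ?_⟩
    · rintro z rfl hz; exact hu' (Or.inl hz)
    · rw [Set.union_assoc, g4]; ext z; simp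
    · rintro z (rfl | hz) hz'
      · exact absurd (Or.inr hz') hu'
      · exact g5 z hz hz'
    · rintro z (rfl | hz) hz'
      · exact absurd hz' hu
      · exact g6 z hz hz'
    · intro e he'
      simp only [Walk.edges_cons, List.mem_cons, Set.mem_ofPred_eq] at he'
      rcases he' with rfl | he'
      · simp
      · have := g7 he'
        simp only [Set.mem_union, Set.mem_singleton_iff] at this ⊢; tauto

end HPsec


section Sqsec
variable {V : Type*} {G : SimpleGraph V}

/-- `v 0, …, v l` is a path of `G`. -/
def Sq (G : SimpleGraph V) (v : ℕ → V) (l : ℕ) : Prop :=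
  (∀ i j, i ≤ l → j ≤ l → v i = v j → i = j) ∧ ∀ i, i < l → G.Adj (v i) (v (i + 1))

/-- vertices `v i, …, v j` -/
def img (v : ℕ → V) (i j : ℕ) : Set V := {x | ∃ r, i ≤ r ∧ r ≤ j ∧ v r = x}

/-- edges of the segment `v i, …, v j` -/
def edg (v : ℕ → V) (i j : ℕ) : Set (Sym2 V) := {e | ∃ r, i ≤ r ∧ r < j ∧ s(v r, v (r + 1)) = e}

theorem mem_img {v : ℕ → V} {i j r : ℕ} (h1 : i ≤ r) (h2 : r ≤ j) : v r ∈ img v i j :=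
  ⟨r, h1, h2, rfl⟩

theorem mem_edg {v : ℕ → V} {i j r : ℕ} (h1 : i ≤ r) (h2 : r < j) :
    s(v r, v (r + 1)) ∈ edg v i j := ⟨r, h1, h2, rfl⟩

theorem Sq.seg {v : ℕ → V} {l : ℕ} (h : Sq G v l) {i j : ℕ} (hij : i ≤ j) (hj : j ≤ l) :
    HP G (v i) (v j) (img v i j) (edg v i j) := by
  induction j, hij using Nat.le_induction with
  | base =>
    refine (HP.single (v i)).mono ?_ ?_
    · ext x; constructor
      · rintro rfl; exact mem_img le_rfl le_rfl
      · rintro ⟨r, h1, h2, rfl⟩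
        have : r = i := by omega
        subst this; rfl
    · rintro e ⟨r, h1, h2, _⟩; omega
  | succ j hij ih =>
    have := (ih (by omega)).joinE (h.2 j (by omega)) (HP.single (v (j + 1))) (by
      rintro x ⟨r, h1, h2, rfl⟩ hx
      have := h.1 r (j + 1) (by omega) (by omega) hx
      omega)
    refine this.mono ?_ ?_
    · ext x; constructor
      · rintro (⟨r, h1, h2, rfl⟩ | rfl)
        · exact mem_img h1 (by omega)
        · exact mem_img (by omega) le_rfl
      · rintro ⟨r, h1, h2, rfl⟩
        by_cases hr : r = j + 1
        · right; subst hr; rfl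
        · left; exact mem_img h1 (by omega)
    · rintro e ⟨r, h1, h2, rfl⟩
      by_cases hr : r = j
      · subst hr; right; rfl
      · left; left; exact mem_edg h1 (by omega)

theorem Sq.segr {v : ℕ → V} {l : ℕ} (h : Sq G v l) {i j : ℕ} (hij : i ≤ j) (hj : j ≤ l) :
    HP G (v j) (v i) (img v i j) (edg v i j) := (h.seg hij hj).symm

theorem Sq.disj {v : ℕ → V} {l : ℕ} (h : Sq G v l) {i j i' j' : ℕ} (hj : j ≤ l) (hj' : j' ≤ l)
    (hd : j < i' ∨ j' < i) : ∀ x ∈ img v i j, x ∉ img v i' j' := by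
  rintro x ⟨r, h1, h2, rfl⟩ ⟨r', h1', h2', h3⟩
  have := h.1 r' r (by omega) (by omega) h3
  omega

theorem Sq.disj3 {v : ℕ → V} {l : ℕ} (h : Sq G v l) {i j i' j' i'' j'' : ℕ} (hj : j ≤ l)
    (hj' : j' ≤ l) (hj'' : j'' ≤ l)
    (hd : j < i' ∨ j' < i) (hd' : j < i'' ∨ j'' < i) :
    ∀ x ∈ img v i j, x ∉ img v i' j' ∪ img v i'' j'' := by
  rintro x hx (hx' | hx')
  · exact h.disj hj hj' hd x hx hx'
  · exact h.disj hj hj'' hd' x hx hx'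

theorem HP.toSq {u w : V} {S : Set V} {E : Set (Sym2 V)} (h : HP G u w S E) :
    ∃ (v : ℕ → V) (l : ℕ), Sq G v l ∧ v 0 = u ∧ v l = w ∧ img v 0 l = S := by
  obtain ⟨p, h1, h2, _⟩ := h
  refine ⟨p.getVert, p.length, ⟨?_, ?_⟩, by simp, by simp, ?_⟩
  · intro i j hi hj hij
    exact h1.getVert_injOn hi hj hij
  · intro i hi
    exact p.adj_getVert_succ hi
  · ext x
    rw [← h2, Walk.mem_support_iff_exists_getVert]
    constructor
    · rintro ⟨r, _, h, rfl⟩; exact ⟨r, rfl, h⟩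
    · rintro ⟨r, rfl, h⟩; exact ⟨r, by omega, h, rfl⟩

/-- all colours below `K` occur in `E` -/
def Cov (c : Sym2 V → ℕ) (K : ℕ) (E : Set (Sym2 V)) : Prop := ∀ i, i < K → ∃ e ∈ E, c e = i

theorem Cov.mono {c : Sym2 V → ℕ} {K : ℕ} {E E' : Set (Sym2 V)} (h : Cov c K E) (hE : E ⊆ E') :
    Cov c K E' := fun i hi => by
  obtain ⟨e, he, h'⟩ := h i hi
  exact ⟨e, hE he, h'⟩

/-- The pair condition on the whole graph. -/
def FullC (G : SimpleGraph V) (k : ℕ) : Prop :=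
  ∃ c : Sym2 V → ℕ, ∀ u v, u ≠ v → ∃ S E, HP G u v S E ∧ Cov c k E

theorem reduction [Fintype V] (k : ℕ) (hk : 2 ≤ k) (hV : ∃ u v : V, u ≠ v) (h : FullC G k) :
    G.KColorConnectable k ∧ G.ccConn k = k := by
  classical
  obtain ⟨c, hc⟩ := h
  set c' : Sym2 V → ℕ := fun e => if c e < k then c e else 0 with hc'
  have hcon : G.IsKColorConnecting k c' := by
    intro u v huv
    obtain ⟨S, E, ⟨p, h1, _, h3⟩, hcov⟩ := hc u v huv
    refine ⟨p, h1, ?_⟩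
    have : Finset.range k ⊆ (p.edges.map c').toFinset := by
      intro i hi
      rw [Finset.mem_range] at hi
      obtain ⟨e, he, hei⟩ := hcov i hi
      rw [List.mem_toFinset, List.mem_map]
      refine ⟨e, h3 e he, ?_⟩
      simp [hc', hei, hi]
    simpa using Finset.card_le_card this
  have lower : ∀ d : Sym2 V → ℕ, G.IsKColorConnecting k d → k ≤ (d '' G.edgeSet).ncard := by
    intro d hd
    obtain ⟨u, v, huv⟩ := hV
    obtain ⟨p, _, h2⟩ := hd u v huv
    refine h2.trans ?_
    rw [← Set.ncard_coe_finset]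
    apply Set.ncard_le_ncard _ (Set.toFinite _)
    intro i hi
    rw [Finset.mem_coe, List.mem_toFinset, List.mem_map] at hi
    obtain ⟨e, he, rfl⟩ := hi
    exact ⟨e, p.edges_subset_edgeSet he, rfl⟩
  have upper : (c' '' G.edgeSet).ncard ≤ k := by
    have : c' '' G.edgeSet ⊆ (Finset.range k : Set ℕ) := by
      rintro _ ⟨e, _, rfl⟩
      simp only [Finset.coe_range, Set.mem_Iio, hc']
      split_ifs <;> omega
    have h2 := Set.ncard_le_ncard this (Finset.finite_toSet _)
    rwa [Set.ncard_coe_finset, Finset.card_range] at h2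
  refine ⟨⟨c', hcon⟩, le_antisymm (Nat.sInf_le ⟨c', hcon, le_antisymm upper (lower c' hcon)⟩) ?_⟩
  apply le_csInf
  · exact ⟨k, c', hcon, le_antisymm upper (lower c' hcon)⟩
  · rintro n ⟨d, hd, rfl⟩
    exact lower d hd

/-- colouring from an index function -/
theorem exists_col (v : ℕ → V) (l : ℕ) (hv : ∀ i j, i ≤ l → j ≤ l → v i = v j → i = j)
    (f : ℕ → ℕ → ℕ) : ∃ c : Sym2 V → ℕ, ∀ i j, i < j → j ≤ l → c s(v i, v j) = f i j := by
  classical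
  refine ⟨fun e => if h : ∃ q : ℕ × ℕ, q.1 < q.2 ∧ q.2 ≤ l ∧ s(v q.1, v q.2) = e then
    f h.choose.1 h.choose.2 else 0, ?_⟩
  intro i j hij hj
  have hex : ∃ q : ℕ × ℕ, q.1 < q.2 ∧ q.2 ≤ l ∧ s(v q.1, v q.2) = s(v i, v j) :=
    ⟨(i, j), hij, hj, rfl⟩
  beta_reduce
  rw [dif_pos hex]
  obtain ⟨h1, h2, h3⟩ := hex.choose_spec
  rw [Sym2.eq_iff] at h3
  rcases h3 with ⟨h3, h4⟩ | ⟨h3, h4⟩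
  · rw [hv _ _ (by omega) (by omega) h3, hv _ _ (by omega) (by omega) h4]
  · have e1 := hv _ _ (by omega) (by omega) h3
    have e2 := hv _ _ (by omega) (by omega) h4
    omega

end Sqsec


section Ear
variable {V : Type*} {G : SimpleGraph V}

/-- convenient form of 2-connectedness -/
def TC (G : SimpleGraph V) : Prop :=
  (∀ u v, ∃ S, HP G u v S ∅) ∧ ∀ d u v, u ≠ d → v ≠ d → ∃ S, d ∉ S ∧ HP G u v S ∅

theorem TC.of (h : G.IsTwoConnected) : TC G := by
  classical
  obtain ⟨_, h1, h2⟩ := h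
  constructor
  · intro u v
    obtain ⟨p, hp⟩ := h1.preconnected.exists_isPath u v
    exact ⟨{x | x ∈ p.support}, p, hp, fun _ => Iff.rfl, by simp⟩
  · intro d u v hu hv
    obtain ⟨p, hp⟩ := (h2 d).preconnected.exists_isPath ⟨u, hu⟩ ⟨v, hv⟩
    let q : G.Walk u v := p.map (Embedding.induce _).toHom
    have hq : q.IsPath := Walk.IsPath.map (Embedding.induce (G := G) {d}ᶜ).injective hp
    refine ⟨{x | x ∈ q.support}, ?_, q, hq, fun _ => Iff.rfl, by simp⟩
    intro hd
    have hd' : d ∈ q.support := hd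
    have hs : q.support = p.support.map (Embedding.induce (G := G) {d}ᶜ).toHom :=
      Walk.support_map _ _
    rw [hs, List.mem_map] at hd'
    obtain ⟨⟨x, hx⟩, _, h⟩ := hd'
    exact hx h

/-- every pair in `D` is joined by a path in `D` whose edge set satisfies `P` -/
def Good (G : SimpleGraph V) (P : Set (Sym2 V) → Prop) (D : Set V) : Prop :=
  ∀ u ∈ D, ∀ v ∈ D, u ≠ v → ∃ S E, S ⊆ D ∧ HP G u v S E ∧ P E

theorem Good.step {P : Set (Sym2 V) → Prop} (hP : ∀ E E', E ⊆ E' → P E → P E') (hG : TC G)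
    {D : Set V} (hD : Good G P D) {a b w0 : V} (ha : a ∈ D) (hb : b ∈ D) (hab : a ≠ b)
    (hw0 : w0 ∉ D) : ∃ D' : Set V, D ⊆ D' ∧ D' ≠ D ∧ Good G P D' := by
  obtain ⟨S0, hS0⟩ := hG.1 w0 a
  obtain ⟨d, S1, _, E1, _, hd, hp1, _, _, _, hS1, _⟩ := hS0.firstHit D hS0.right_mem ha
  obtain ⟨w, hdw, hwS, _⟩ := hp1.symm.cons_cases (by rintro rfl; exact hw0 hd)
  have hwD : w ∉ D := fun h => hdw.ne (hS1 w hwS h).symm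
  obtain ⟨d', hd', hdd'⟩ : ∃ d' ∈ D, d' ≠ d := by
    by_cases h : a = d
    · exact ⟨b, hb, fun h' => hab (h.trans h'.symm)⟩
    · exact ⟨a, ha, h⟩
  obtain ⟨S2, hdS2, hS2⟩ := hG.2 d w d' hdw.ne.symm hdd'
  obtain ⟨y, T, T', E2, _, hy, hT, _, hTT, _, hTD, _⟩ := hS2.firstHit D hS2.right_mem hd'
  have hdT : d ∉ T := fun h => hdS2 (hTT ▸ Or.inl h)
  have hyd : y ≠ d := by rintro rfl; exact hdT hT.right_mem
  have key1 : ∀ z ∈ T, z ∉ D → ∀ v ∈ D, ∃ S E, S ⊆ D ∪ T ∧ HP G z v S E ∧ P E := by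
    intro z hz hzD v hv
    obtain ⟨T1, T2, _, _, h1, h2, h12, h3, _⟩ := hT.split hz
    have hyz : y ≠ z := by rintro rfl; exact hzD hy
    have hT1 : ∀ x ∈ T1, x ∉ D := by
      intro x hx hxD
      have := hTD x (h12 ▸ Or.inl hx) hxD
      subst this
      exact hyz (h3 _ hx h2.right_mem)
    by_cases hvd : v = d
    · subst hvd
      obtain ⟨S, E, hS, hp, hPE⟩ := hD y hy v hv hyd
      refine ⟨_, _, ?_, h2.joinV hp ?_, hP _ _ (Set.subset_union_right) hPE⟩
      · rintro x (hx | hx)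
        · exact Or.inr (h12 ▸ Or.inr hx)
        · exact Or.inl (hS hx)
      · intro x hx hx'
        exact hTD x (h12 ▸ Or.inr hx) (hS hx')
    · obtain ⟨S, E, hS, hp, hPE⟩ := hD d hd v hv (Ne.symm hvd)
      refine ⟨_, _, ?_, h1.symm.joinE hdw.symm hp ?_, hP _ _ ?_ hPE⟩
      · rintro x (hx | hx)
        · exact Or.inr (h12 ▸ Or.inl hx)
        · exact Or.inl (hS hx)
      · intro x hx hx'
        exact hT1 x hx (hS hx')
      · intro e he; exact Or.inl (Or.inr he)
  have key2 : ∀ z ∈ T, z ∉ D → ∀ z' ∈ T, z' ∉ D → z ≠ z' →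
      ∃ S E, S ⊆ D ∪ T ∧ HP G z z' S E ∧ P E := by
    intro z hz hzD z' hz' hzD' hne
    have main : ∀ z z' : V, z ∉ D → z' ∉ D → ∀ U1 U2 F1 F2, HP G w z U1 F1 → HP G z' y U2 F2 →
        U1 ⊆ T → U2 ⊆ T → (∀ x ∈ U1, x ∉ U2) → ∃ S E, S ⊆ D ∪ T ∧ HP G z z' S E ∧ P E := by
      intro z z' _ _ U1 U2 F1 F2 h1 h2 hU1 hU2 hU
      obtain ⟨S, E, hS, hp, hPE⟩ := hD d hd y hy hyd.symm
      have hU1D : ∀ x ∈ U1, x ∉ D := by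
        intro x hx hxD
        have := hTD x (hU1 hx) hxD
        subst this
        exact hU _ hx h2.right_mem
      refine ⟨_, _, ?_, (h1.symm.joinE hdw.symm hp ?_).joinV h2.symm ?_, hP _ _ ?_ hPE⟩
      · rintro x ((hx | hx) | hx)
        · exact Or.inr (hU1 hx)
        · exact Or.inl (hS hx)
        · exact Or.inr (hU2 hx)
      · intro x hx hx'
        exact hU1D x hx (hS hx')
      · rintro x (hx | hx) hx'
        · exact absurd hx' (hU x hx)
        · exact hTD x (hU2 hx') (hS hx)
      · intro e he; exact Or.inl (Or.inl (Or.inr he))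
    obtain ⟨T1, T2, _, _, h1, h2, h12, h3, _⟩ := hT.split hz
    have hz'' := hz'
    rw [← h12] at hz''
    rcases hz'' with hz'' | hz''
    · obtain ⟨U1, U2, _, _, g1, g2, g12, g3, _⟩ := h1.split hz''
      obtain ⟨S, E, i1, i2, i3⟩ := main z' z hzD' hzD _ _ _ _ g1 h2
        (fun x hx => h12 ▸ Or.inl (g12 ▸ Or.inl hx))
        (fun x hx => h12 ▸ Or.inr hx) (by
          intro x hx hx'
          have := h3 x (g12 ▸ Or.inl hx) hx'
          subst this
          exact hne (g3 _ hx g2.right_mem))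
      exact ⟨S, E, i1, i2.symm, i3⟩
    · obtain ⟨U1, U2, _, _, g1, g2, g12, g3, _⟩ := h2.split hz''
      exact main z z' hzD hzD' _ _ _ _ h1 g2
        (fun x hx => h12 ▸ Or.inl hx)
        (fun x hx => h12 ▸ Or.inr (g12 ▸ Or.inr hx)) (by
          intro x hx hx'
          have := h3 x hx (g12 ▸ Or.inr hx')
          subst this
          exact hne (g3 _ g1.left_mem hx'))
  refine ⟨D ∪ T, Set.subset_union_left, ?_, ?_⟩
  · intro h
    exact hwD (h ▸ Or.inr hT.left_mem)
  · intro u hu v hv huv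
    by_cases huD : u ∈ D
    · by_cases hvD : v ∈ D
      · obtain ⟨S, E, h1, h2, h3⟩ := hD u huD v hvD huv
        exact ⟨S, E, fun x hx => Or.inl (h1 hx), h2, h3⟩
      · obtain ⟨S, E, h1, h2, h3⟩ := key1 v (hv.resolve_left hvD) hvD u huD
        exact ⟨S, E, h1, h2.symm, h3⟩
    · by_cases hvD : v ∈ D
      · exact key1 u (hu.resolve_left huD) huD v hvD
      · exact key2 u (hu.resolve_left huD) huD v (hv.resolve_left hvD) hvD huv

theorem Good.closure [Finite V] {P : Set (Sym2 V) → Prop} (hP : ∀ E E', E ⊆ E' → P E → P E')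
    (hG : TC G) {D : Set V} (hD : Good G P D) {a b : V} (ha : a ∈ D) (hb : b ∈ D) (hab : a ≠ b) :
    ∀ u v, u ≠ v → ∃ S E, HP G u v S E ∧ P E := by
  classical
  obtain ⟨M, hM⟩ := (Set.toFinite {D' : Set V | D ⊆ D' ∧ Good G P D'}).exists_maximal
    ⟨D, le_rfl, hD⟩
  have hu : ∀ w, w ∈ M := by
    intro w
    by_contra hw
    obtain ⟨D', h1, h2, h3⟩ := Good.step hP hG hM.1.2 (hM.1.1 ha) (hM.1.1 hb) hab hw
    exact h2 (le_antisymm (hM.2 ⟨hM.1.1.trans h1, h3⟩ h1) h1)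
  intro u v huv
  obtain ⟨S, E, _, h⟩ := hM.1.2 u (hu u) v (hu v) huv
  exact ⟨S, E, h⟩

theorem cycle_good {k M : ℕ} (hk : 2 ≤ k) (hM : 2 * k ≤ M + 1) {z : ℕ → V} (hz : Sq G z M)
    (hcl : G.Adj (z M) (z 0)) : ∃ c : Sym2 V → ℕ, Good G (Cov c k) (img z 0 M) := by
  obtain ⟨c, hc⟩ := exists_col z M hz.1 (fun i j => if i = 0 ∧ j = M then M % k else i % k)
  have hce : ∀ i, i < M → c s(z i, z (i + 1)) = i % k := by
    intro i hi
    rw [hc i (i + 1) (by omega) (by omega), if_neg (by omega)]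
  have hcc : c s(z 0, z M) = M % k := by
    rw [hc 0 M (by omega) (by omega), if_pos ⟨rfl, rfl⟩]
  refine ⟨c, ?_⟩
  have main : ∀ s g, s < g → g ≤ M → ∃ S E, S ⊆ img z 0 M ∧ HP G (z s) (z g) S E ∧ Cov c k E := by
    intro s g hsg hg
    by_cases hlen : k ≤ g - s
    · refine ⟨_, _, ?_, hz.seg hsg.le hg, ?_⟩
      · rintro x ⟨r, h1, h2, rfl⟩; exact mem_img (by omega) (by omega)
      · intro i hi
        -- find r in [s, s+k) with r % k = i
        have hs := Nat.mod_add_div s k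
        have hsk := Nat.mod_lt s (show 0 < k by omega)
        by_cases h : s % k ≤ i
        · refine ⟨_, mem_edg (r := s + (i - s % k)) (by omega) (by omega), ?_⟩
          rw [hce _ (by omega)]
          have : s + (i - s % k) = i + k * (s / k) := by omega
          rw [this, Nat.add_mul_mod_self_left, Nat.mod_eq_of_lt hi]
        · refine ⟨_, mem_edg (r := s + (i + k - s % k)) (by omega) (by omega), ?_⟩
          rw [hce _ (by omega)]
          have : s + (i + k - s % k) = i + k * (s / k + 1) := by
            rw [Nat.mul_add]; omega
          rw [this, Nat.add_mul_mod_self_left, Nat.mod_eq_of_lt hi]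
    · have hp := (hz.segr (Nat.zero_le s) (by omega)).joinE hcl.symm (hz.segr hg le_rfl)
        (hz.disj (by omega) le_rfl (Or.inl hsg))
      refine ⟨_, _, ?_, hp, ?_⟩
      · rintro x (⟨r, h1, h2, rfl⟩ | ⟨r, h1, h2, rfl⟩) <;> exact mem_img (by omega) (by omega)
      · -- edges r < s, r in [g, M), and the closing edge, as M
        have hr : ∀ r, r < s ∨ (g ≤ r ∧ r ≤ M) → ∃ e ∈ edg z 0 s ∪ edg z g M ∪ {s(z 0, z M)},
            c e = r % k := by
          rintro r (h | ⟨h, h'⟩)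
          · exact ⟨_, Or.inl (Or.inl (mem_edg (Nat.zero_le r) h)), hce r (by omega)⟩
          · by_cases hrM : r = M
            · subst hrM; exact ⟨_, Or.inr rfl, hcc⟩
            · exact ⟨_, Or.inl (Or.inr (mem_edg h (by omega))), hce r (by omega)⟩
        intro i hi
        by_cases h1 : i < s
        · obtain ⟨e, he, h⟩ := hr i (Or.inl h1)
          exact ⟨e, he, by rw [h, Nat.mod_eq_of_lt hi]⟩
        by_cases h2 : g ≤ i
        · obtain ⟨e, he, h⟩ := hr i (Or.inr ⟨h2, by omega⟩)
          exact ⟨e, he, by rw [h, Nat.mod_eq_of_lt hi]⟩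
        · obtain ⟨e, he, h⟩ := hr (i + k) (Or.inr ⟨by omega, by omega⟩)
          exact ⟨e, he, by rw [h, Nat.add_mod_right, Nat.mod_eq_of_lt hi]⟩
  rintro _ ⟨s, _, hs, rfl⟩ _ ⟨g, _, hg, rfl⟩ hne
  rcases lt_trichotomy s g with h | h | h
  · exact main s g h hg
  · subst h; exact absurd rfl hne
  · obtain ⟨S, E, h1, h2, h3⟩ := main g s h hs
    exact ⟨S, E, h1, h2.symm, h3⟩

theorem full_of_cycle [Finite V] (hG : TC G) {k M : ℕ} (hk : 2 ≤ k) (hM : 2 * k ≤ M + 1)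
    {z : ℕ → V} (hz : Sq G z M) (hcl : G.Adj (z M) (z 0)) : FullC G k := by
  obtain ⟨c, hc⟩ := cycle_good hk hM hz hcl
  refine ⟨c, ?_⟩
  refine Good.closure (fun E E' h h' => h'.mono h) hG hc (mem_img (Nat.zero_le 0) (Nat.zero_le M))
    (mem_img (Nat.zero_le M) le_rfl) ?_
  intro h
  have := hz.1 0 M (by omega) (by omega) h
  omega

/-- A version where the cycle is given as a path through a set `S`. -/
theorem full_of_cycle_set [Finite V] (hG : TC G) {k : ℕ} (hk : 2 ≤ k) {u v : V} {S : Set V}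
    {E : Set (Sym2 V)} (h : HP G u v S E) (hcl : G.Adj v u) (hS : 2 * k ≤ S.ncard) :
    FullC G k := by
  obtain ⟨z, l, h1, rfl, rfl, rfl⟩ := h.toSq
  refine full_of_cycle hG hk ?_ h1 hcl
  refine hS.trans ?_
  have : img z 0 l = z '' (Finset.range (l + 1) : Set ℕ) := by
    ext x; constructor
    · rintro ⟨r, _, h, rfl⟩; exact ⟨r, by simp; omega, rfl⟩
    · rintro ⟨r, h, rfl⟩; exact mem_img (Nat.zero_le r) (by simp at h; omega)
  rw [this]
  refine (Set.ncard_image_le (Finset.finite_toSet _)).trans ?_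
  rw [Set.ncard_coe_finset, Finset.card_range]

end Ear


section Dirac
variable {V : Type*} {G : SimpleGraph V}

theorem Sq.card_le [Finite V] {v : ℕ → V} {l : ℕ} (h : Sq G v l) (I : Finset ℕ) (S : Set V)
    (hI : ∀ i ∈ I, i ≤ l ∧ v i ∈ S) : I.card ≤ S.ncard := by
  classical
  have h1 : (I.image v).card = I.card := by
    apply Finset.card_image_of_injOn
    intro a ha b hb hab
    exact h.1 a b (hI a ha).1 (hI b hb).1 hab
  rw [← h1, ← Set.ncard_coe_finset]
  apply Set.ncard_le_ncard _ (Set.toFinite _)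
  intro x hx
  rw [Finset.mem_coe, Finset.mem_image] at hx
  obtain ⟨a, ha, rfl⟩ := hx
  exact (hI a ha).2

theorem Sq.ncard_img [Finite V] {v : ℕ → V} {l : ℕ} (h : Sq G v l) : l + 1 ≤ (img v 0 l).ncard := by
  have := h.card_le (Finset.range (l + 1)) (img v 0 l) (by
    intro i hi
    rw [Finset.mem_range] at hi
    exact ⟨by omega, mem_img (by omega) (by omega)⟩)
  simpa using this

theorem exists_longest [Finite V] [Nonempty V] : ∃ (v : ℕ → V) (l : ℕ), Sq G v l ∧
    ∀ u w S E, HP G u w S E → S.ncard ≤ l + 1 := by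
  classical
  have hb : ∀ l, (∃ v, Sq G v l) → l ≤ Nat.card V := by
    rintro l ⟨v, hv⟩
    have h1 := hv.ncard_img
    have h2 := Set.ncard_le_ncard (Set.subset_univ (img v 0 l)) (Set.toFinite _)
    rw [Set.ncard_univ] at h2
    omega
  have h0 : ∃ v, Sq G v 0 := by
    obtain ⟨a⟩ := ‹Nonempty V›
    exact ⟨fun _ => a, by intro i j hi hj _; omega, by intro i hi; omega⟩
  have hs := Nat.findGreatest_spec (P := fun l => ∃ v, Sq G v l) (Nat.zero_le (Nat.card V)) h0
  obtain ⟨v, hv⟩ := hs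
  refine ⟨v, _, hv, ?_⟩
  intro u w S E h
  obtain ⟨z, m, h1, _, _, rfl⟩ := h.toSq
  have h2 := Nat.le_findGreatest (P := fun l => ∃ v, Sq G v l) (hb m ⟨z, h1⟩) ⟨z, h1⟩
  have h3 : (img z 0 m).ncard ≤ m + 1 := by
    have : img z 0 m = z '' (Finset.range (m + 1) : Set ℕ) := by
      ext x; constructor
      · rintro ⟨r, _, h, rfl⟩; exact ⟨r, by simp; omega, rfl⟩
      · rintro ⟨r, h, rfl⟩; exact mem_img (Nat.zero_le r) (by simp at h; omega)
    rw [this]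
    refine (Set.ncard_image_le (Finset.finite_toSet _)).trans ?_
    rw [Set.ncard_coe_finset, Finset.card_range]
  omega

theorem cycle_ext (hG : TC G) {u v w0 : V} {S : Set V} {E : Set (Sym2 V)} (h : HP G u v S E)
    (hvu : G.Adj v u) (hw0 : w0 ∉ S) :
    ∃ u' v' S' E' w, HP G u' v' S' E' ∧ w ∉ S ∧ insert w S ⊆ S' := by
  obtain ⟨S0, hS0⟩ := hG.1 w0 u
  obtain ⟨d, S1, _, E1, _, hd, hp1, _, _, _, hS1, _⟩ := hS0.firstHit S hS0.right_mem h.left_mem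
  obtain ⟨w, hdw, hwS, _⟩ := hp1.symm.cons_cases (by rintro rfl; exact hw0 hd)
  have hwD : w ∉ S := fun h => hdw.ne (hS1 w hwS h).symm
  by_cases hdv : d = v
  · subst hdv
    refine ⟨_, _, _, _, w, (HP.single w).joinE hdw.symm h.symm ?_, hwD, ?_⟩
    · rintro x rfl; exact hwD
    · rintro x (rfl | hx)
      · exact Or.inl rfl
      · exact Or.inr hx
  · obtain ⟨T1, T2, _, _, h1, h2, h12, h3, _⟩ := h.split hd
    obtain ⟨d1, hd1, _, _, h4, _⟩ := h2.cons_cases hdv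
    have h5 := (h1.symm.joinE hvu.symm h4.symm (by
      rintro x hx ⟨hx', hxd⟩
      exact hxd (h3 x hx hx')))
    refine ⟨_, _, _, _, w, (HP.single w).joinE hdw.symm h5 ?_, hwD, ?_⟩
    · rintro x rfl (hx | hx)
      · exact hwD (h12 ▸ Or.inl hx)
      · exact hwD (h12 ▸ Or.inr hx.1)
    · rintro x (rfl | hx)
      · exact Or.inl rfl
      · right
        rw [← h12] at hx
        by_cases hxd : x = d
        · subst hxd; exact Or.inl h1.right_mem
        · rcases hx with hx | hx
          · exact Or.inl hx
          · exact Or.inr ⟨hx, hxd⟩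

theorem dirac_a [Fintype V] (hG : TC G) {k : ℕ} (hk : 2 ≤ k) (hn : 2 * k ≤ Fintype.card V)
    {v : ℕ → V} {l : ℕ} (hv : Sq G v l) (hmax : ∀ u w S E, HP G u w S E → S.ncard ≤ l + 1)
    (I0 Il : Finset ℕ) (hI0 : ∀ i, i ∈ I0 ↔ i ≤ l ∧ G.Adj (v 0) (v i))
    (hIl : ∀ i, i ∈ Il ↔ i ≤ l ∧ G.Adj (v l) (v i)) (hc0 : k ≤ I0.card) (hcl : k ≤ Il.card)
    (hex : ∃ i ∈ Il, ∃ j ∈ I0, i < j) : FullC G k := by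
  classical
  have hex' : ∃ d, ∃ i ∈ Il, ∃ j ∈ I0, i < j ∧ j - i = d := by
    obtain ⟨i, hi, j, hj, h⟩ := hex
    exact ⟨_, i, hi, j, hj, h, rfl⟩
  obtain ⟨i, hi, j, hj, hij, hd⟩ := Nat.find_spec hex'
  have hmin : ∀ i' ∈ Il, ∀ j' ∈ I0, i' < j' → j - i ≤ j' - i' := by
    intro i' hi' j' hj' h
    rw [hd]
    exact Nat.find_min' hex' ⟨i', hi', j', hj', h, rfl⟩
  clear hd
  have hi' := (hIl i).1 hi
  have hj' := (hI0 j).1 hj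
  have hp := (hv.seg (Nat.zero_le i) hi'.1).joinE hi'.2.symm (hv.segr hj'.1 le_rfl)
    (hv.disj hi'.1 le_rfl (Or.inl hij))
  by_cases hji : j = i + 1
  · have hS : ∀ r, r ≤ l → v r ∈ img v 0 i ∪ img v j l := by
      intro r hr
      by_cases h : r ≤ i
      · exact Or.inl (mem_img (by omega) h)
      · exact Or.inr (mem_img (by omega) hr)
    have hcard : l + 1 ≤ (img v 0 i ∪ img v j l).ncard := by
      have := hv.card_le (Finset.range (l + 1)) (img v 0 i ∪ img v j l) (by
        intro i hi
        rw [Finset.mem_range] at hi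
        exact ⟨by omega, hS i (by omega)⟩)
      simpa using this
    refine full_of_cycle_set hG hk hp hj'.2.symm ?_
    have hall : ∀ w, w ∈ img v 0 i ∪ img v j l := by
      intro w
      by_contra hw
      obtain ⟨u', v', S', E', w', h1, h2, h3⟩ := cycle_ext hG hp hj'.2.symm hw
      have h4 := hmax _ _ _ _ h1
      have h5 := Set.ncard_le_ncard h3 (Set.toFinite _)
      rw [Set.ncard_insert_of_notMem h2] at h5
      omega
    rw [Set.eq_univ_of_forall hall, Set.ncard_univ, Nat.card_eq_fintype_card]
    exact hn
  · refine full_of_cycle_set hG hk hp hj'.2.symm ?_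
    have h0 : ∀ r ∈ I0, 1 ≤ r ∧ r ≤ l := by
      intro r hr
      have := (hI0 r).1 hr
      refine ⟨?_, this.1⟩
      by_contra h
      have : r = 0 := by omega
      subst this
      exact this.2.ne rfl
    have h1 : ∀ r ∈ Il, r < l := by
      intro r hr
      have := (hIl r).1 hr
      by_contra h
      have : r = l := by omega
      subst this
      exact this.2.ne rfl
    have hdis : Disjoint ((I0.erase j).image (fun r => r - 1)) (insert l Il) := by
      rw [Finset.disjoint_left]
      intro r hr hr'
      rw [Finset.mem_image] at hr
      obtain ⟨r1, hr1, rfl⟩ := hr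
      rw [Finset.mem_erase] at hr1
      have := h0 r1 hr1.2
      rw [Finset.mem_insert] at hr'
      rcases hr' with h | h
      · omega
      · have := hmin _ h _ hr1.2 (by omega)
        omega
    have hc : 2 * k ≤ (((I0.erase j).image (fun r => r - 1)) ∪ (insert l Il)).card := by
      rw [Finset.card_union_of_disjoint hdis, Finset.card_insert_of_notMem
        (fun h => by have := h1 l h; omega), Finset.card_image_of_injOn, Finset.card_erase_of_mem hj]
      · omega
      · intro a ha b hb hab
        have := h0 a (Finset.mem_of_mem_erase ha)
        have := h0 b (Finset.mem_of_mem_erase hb)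
        simp only at hab
        omega
    refine hc.trans (hv.card_le _ _ ?_)
    intro r hr
    have key : r ≤ l ∧ (r ≤ i ∨ j ≤ r) := by
      rw [Finset.mem_union, Finset.mem_image, Finset.mem_insert] at hr
      rcases hr with ⟨r1, hr1, rfl⟩ | rfl | hr
      · rw [Finset.mem_erase] at hr1
        have := h0 r1 hr1.2
        by_cases h : i < r1
        · have := hmin i hi r1 hr1.2 h
          omega
        · omega
      · omega
      · have := h1 r hr
        by_cases h : r < j
        · have := hmin r hr j hj h
          omega
        · omega
    refine ⟨key.1, ?_⟩
    rcases key.2 with h | h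
    · exact Or.inl (mem_img (by omega) h)
    · exact Or.inr (mem_img h key.1)

/-- a path from `A` to `B` with inner vertices outside `A ∪ B` -/
def Lk (G : SimpleGraph V) (A B : Set V) (c d : V) (T : Set V) : Prop :=
  HP G c d T ∅ ∧ c ∈ A ∧ d ∈ B ∧ (∀ x ∈ T, x ∈ A → x = c) ∧ ∀ x ∈ T, x ∈ B → x = d

theorem Lk.symm {A B : Set V} {c d : V} {T : Set V} (h : Lk G A B c d T) : Lk G B A d c T :=
  ⟨h.1.symm, h.2.2.1, h.2.1, h.2.2.2.2, h.2.2.2.1⟩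

theorem Lk.extract {A B : Set V} {a b : V} {S : Set V} {E : Set (Sym2 V)} (h : HP G a b S E)
    (ha : a ∈ A) (hb : b ∈ B) : ∃ c d T, T ⊆ S ∧ Lk G A B c d T := by
  obtain ⟨d, S1, S2, _, _, hd, h1, _, h12, _, hS1, _⟩ := h.firstHit B h.right_mem hb
  obtain ⟨c, T1, T2, _, _, hc, g1, _, g12, _, gT1, _⟩ := h1.symm.firstHit A h1.left_mem ha
  refine ⟨c, d, T1, ?_, g1.symm.mono rfl (Set.empty_subset _), hc, hd, gT1, ?_⟩
  · intro x hx
    rw [← h12, ← g12]; exact Or.inl (Or.inl hx)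
  · intro x hx
    exact hS1 x (g12 ▸ Or.inl hx)

theorem Lk.start_ne {A B : Set V} {c d : V} {T : Set V} (h : Lk G A B c d T) {a0 : V}
    (hB : a0 ∉ B) (hN : ∀ x, G.Adj a0 x → x ∈ A) : c ≠ a0 := by
  rintro rfl
  obtain ⟨h1, h2, h3, h4, h5⟩ := h
  obtain ⟨w, hw, hwT, _⟩ := h1.cons_cases (by rintro rfl; exact hB h3)
  exact hw.ne (h4 w hwT (hN w hw)).symm

theorem Lk.reroute {A B : Set V} {a b c d c' d' : V} {Q T T' : Set V} (hQ : Lk G A B a b Q)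
    (hT : Lk G A B c d T) (hT' : Lk G A B c' d' T') (hd : ∀ x ∈ T, x ∉ T') :
    ∃ c'' d1 d2 T1 T2, Lk G A B a d1 T1 ∧ Lk G A B c'' d2 T2 ∧ (∀ x ∈ T1, x ∉ T2) ∧
      (b = d ∨ b = d' → b = d1 ∨ b = d2) := by
  by_cases hX : ∃ x ∈ Q, x ∈ T ∪ T'
  · obtain ⟨y0, hy0, hyX⟩ := hX
    obtain ⟨y, Q1, Q2, _, _, hy, h1, h2, h12, h3, h4, _⟩ := hQ.1.firstHit (T ∪ T') hy0 hyX
    have main : ∀ c d c' d' T T', Lk G A B c d T → Lk G A B c' d' T' → (∀ x ∈ T, x ∉ T') →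
        y ∈ T → (∀ x ∈ Q1, x ∈ T ∪ T' → x = y) → ∃ T1, Lk G A B a d T1 ∧ ∀ x ∈ T1, x ∉ T' := by
      intro c d c' d' T T' hT hT' hd hy h4
      obtain ⟨U1, U2, _, _, g1, g2, g12, g3, _⟩ := hT.1.split hy
      refine ⟨Q1 ∪ U2, ⟨(h1.joinV g2 ?_).mono rfl (Set.empty_subset _), hQ.2.1, hT.2.2.1, ?_, ?_⟩,
        ?_⟩
      · intro x hx hx'
        exact h4 x hx (Or.inl (g12 ▸ Or.inr hx'))
      · rintro x (hx | hx) hxA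
        · exact hQ.2.2.2.1 x (h12 ▸ Or.inl hx) hxA
        · have e1 := hT.2.2.2.1 x (g12 ▸ Or.inr hx) hxA
          subst e1
          have e2 := g3 x g1.left_mem hx
          subst e2
          exact hQ.2.2.2.1 x (h12 ▸ Or.inl h1.right_mem) hxA
      · rintro x (hx | hx) hxB
        · have e1 := hQ.2.2.2.2 x (h12 ▸ Or.inl hx) hxB
          subst e1
          have e2 := h3 x hx h2.right_mem
          subst e2
          exact hT.2.2.2.2 x hy hxB
        · exact hT.2.2.2.2 x (g12 ▸ Or.inr hx) hxB
      · rintro x (hx | hx) hx'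
        · have := h4 x hx (Or.inr hx')
          subst this
          exact hd x hy hx'
        · exact hd x (g12 ▸ Or.inr hx) hx'
    rcases hy with hy | hy
    · obtain ⟨T1, i1, i2⟩ := main c d c' d' T T' hT hT' hd hy h4
      exact ⟨c', d, d', T1, T', i1, hT', i2, id⟩
    · obtain ⟨T1, i1, i2⟩ := main c' d' c d T' T hT' hT (fun x h h' => hd x h' h) hy
        (fun x h h' => h4 x h h'.symm)
      exact ⟨c, d', d, T1, T, i1, hT, i2, Or.symm⟩
  · push Not at hX
    exact ⟨c', b, d', Q, T', hQ, hT', fun x hx h => hX x hx (Or.inr h), fun _ => Or.inl rfl⟩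

theorem HP.edge_mem {u v x : V} {S : Set V} {E : Set (Sym2 V)} {e : Sym2 V} (h : HP G u v S E)
    (he : e ∈ E) (hx : x ∈ e) : x ∈ S := by
  obtain ⟨p, _, h2, h3⟩ := h
  rw [← h2]
  obtain ⟨y, rfl⟩ := Sym2.mem_iff_exists.1 hx
  exact p.fst_mem_support_of_mem_edges (h3 _ he)

theorem dirac_b [Fintype V] (hG : TC G) {k : ℕ} (hk : 2 ≤ k)
    {v : ℕ → V} {l : ℕ} (hv : Sq G v l)
    (hN0 : ∀ x, G.Adj (v 0) x → x ∈ img v 0 l) (hNl : ∀ x, G.Adj (v l) x → x ∈ img v 0 l)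
    (I0 Il : Finset ℕ) (hI0 : ∀ i, i ∈ I0 ↔ i ≤ l ∧ G.Adj (v 0) (v i))
    (hIl : ∀ i, i ∈ Il ↔ i ≤ l ∧ G.Adj (v l) (v i)) (hc0 : k ≤ I0.card) (hcl : k ≤ Il.card)
    (hex : ∀ i ∈ Il, ∀ j ∈ I0, j ≤ i) : FullC G k := by
  classical
  have h0 : ∀ r ∈ I0, 1 ≤ r ∧ r ≤ l := by
    intro r hr
    have := (hI0 r).1 hr
    refine ⟨?_, this.1⟩
    by_contra h
    have : r = 0 := by omega
    subst this
    exact this.2.ne rfl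
  have h1 : ∀ r ∈ Il, r < l := by
    intro r hr
    have := (hIl r).1 hr
    by_contra h
    have : r = l := by omega
    subst this
    exact this.2.ne rfl
  have ne0 : I0.Nonempty := by rw [← Finset.card_pos]; omega
  have nel : Il.Nonempty := by rw [← Finset.card_pos]; omega
  obtain ⟨p, hp, hpmax⟩ := I0.exists_max_image id ne0
  obtain ⟨q, hq, hqmin⟩ := Il.exists_min_image id nel
  simp only [id] at hpmax hqmin
  have hpq := hex q hq p hp
  have hp1 := h0 p hp
  have hql := h1 q hq
  set A := img v 0 p with hA
  set B := img v q l with hB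
  have hNA : ∀ x, G.Adj (v 0) x → x ∈ A := by
    intro x hx
    obtain ⟨r, _, hr, rfl⟩ := hN0 x hx
    exact mem_img (Nat.zero_le r) (hpmax r ((hI0 r).2 ⟨hr, hx⟩))
  have hNB : ∀ x, G.Adj (v l) x → x ∈ B := by
    intro x hx
    obtain ⟨r, _, hr, rfl⟩ := hNl x hx
    exact mem_img (hqmin r ((hIl r).2 ⟨hr, hx⟩)) hr
  have hlA : v l ∉ A := by
    rintro ⟨r, _, h, h'⟩
    have := hv.1 r l (by omega) le_rfl h'
    omega
  have h0B : v 0 ∉ B := by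
    rintro ⟨r, _, h, h'⟩
    have := hv.1 r 0 (by omega) (by omega) h'
    omega
  -- a path from v 0 to v 1 through v l
  obtain ⟨S, hS, hlS⟩ : ∃ S, HP G (v 0) (v 1) S ∅ ∧ v l ∈ S := by
    have hadj := hv.2 (l - 1) (by omega)
    rw [show l - 1 + 1 = l by omega] at hadj
    have hgood : Good G (fun E => ∃ e ∈ E, v l ∈ e) {v l, v (l - 1)} := by
      have he := HP.edge hadj.symm
      intro a ha b hb hab
      rcases ha with rfl | rfl <;> rcases hb with rfl | rfl
      · exact absurd rfl hab
      · exact ⟨_, _, le_rfl, he, _, rfl, by simp⟩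
      · exact ⟨_, _, le_rfl, he.symm, _, rfl, by simp⟩
      · exact absurd rfl hab
    obtain ⟨S, E, h2, e, he, hle⟩ := Good.closure (fun E E' h ⟨e, he, h'⟩ => ⟨e, h he, h'⟩) hG hgood
      (Or.inl rfl) (Or.inr rfl) hadj.ne.symm (v 0) (v 1) (by
        intro h
        have := hv.1 0 1 (by omega) (by omega) h
        omega)
    exact ⟨S, h2.mono rfl (Set.empty_subset _), h2.edge_mem he hle⟩
  obtain ⟨c, d, T, c', d', T', hT, hT', hTT⟩ : ∃ c d T c' d' T', Lk G A B c d T ∧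
      Lk G A B c' d' T' ∧ ∀ x ∈ T, x ∉ T' := by
    obtain ⟨S1, S2, _, _, g1, g2, g12, g3, _⟩ := hS.split hlS
    obtain ⟨c, d, T, hTS, hT⟩ := Lk.extract g1 (A := A) (B := B) (mem_img le_rfl (Nat.zero_le p))
      (mem_img hql.le le_rfl)
    obtain ⟨c', d', T', hTS', hT'⟩ := Lk.extract g2.symm (A := A) (B := B)
      (mem_img (by omega) (by omega)) (mem_img hql.le le_rfl)
    refine ⟨c, d, T, c', d', T', hT, hT', ?_⟩
    intro x hx hx'
    have e1 := g3 x (hTS hx) (hTS' hx')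
    subst e1
    have e2 := hT.2.2.2.2 _ hx (mem_img hql.le le_rfl)
    exact hT.symm.start_ne hlA hNB e2.symm
  have hQ : Lk G A B (v p) (v q) (img v p q) := by
    refine ⟨(hv.seg hpq hql.le).mono rfl (Set.empty_subset _), mem_img (Nat.zero_le p) le_rfl,
      mem_img le_rfl hql.le, ?_, ?_⟩
    · rintro x ⟨r, h2, h3, rfl⟩ ⟨r', h4, h5, h6⟩
      have := hv.1 r' r (by omega) (by omega) h6
      rw [show r = p by omega]
    · rintro x ⟨r, h2, h3, rfl⟩ ⟨r', h4, h5, h6⟩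
      have := hv.1 r' r (by omega) (by omega) h6
      rw [show r = q by omega]
  obtain ⟨c1, d1, d2, T1, T2, hL1, hL2, hL12, _⟩ := hQ.reroute hT hT' hTT
  obtain ⟨d3, a1, a2, U1, U2, hM1, hM2, hM12, ha⟩ := hQ.symm.reroute hL1.symm hL2.symm hL12
  have ha := ha (Or.inl rfl)
  -- final cycle
  have final : ∀ (cc dd y1 y2 : V) (R R' : Set V), Lk G A B cc y1 R → Lk G A B (v p) y2 R' →
      (∀ x ∈ R, x ∉ R') → ((y1 = dd ∧ y2 = v q) ∨ (y1 = v q ∧ y2 = dd)) → FullC G k := by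
    intro cc dd y1 y2 R R' hR hR' hRR hy
    have hddB : dd ∈ B := by
      rcases hy with ⟨rfl, _⟩ | ⟨_, rfl⟩
      · exact hR.2.2.1
      · exact hR'.2.2.1
    have hcc0 := hR.start_ne h0B hNA
    have hddl : dd ≠ v l := by
      rcases hy with ⟨rfl, _⟩ | ⟨_, rfl⟩
      · exact hR.symm.start_ne hlA hNB
      · exact hR'.symm.start_ne hlA hNB
    have hy12 : y1 ≠ y2 := by
      rintro rfl
      exact hRR _ hR.1.right_mem hR'.1.right_mem
    have hddq : dd ≠ v q := by
      rintro rfl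
      rcases hy with ⟨rfl, rfl⟩ | ⟨rfl, rfl⟩ <;> exact hy12 rfl
    have hccp : cc ≠ v p := by
      rintro rfl
      exact hRR _ hR.1.left_mem hR'.1.left_mem
    obtain ⟨α, _, hα, rfl⟩ := hR.2.1
    obtain ⟨β, hβ1, hβ2, rfl⟩ := hddB
    have hα0 : α ≠ 0 := by rintro rfl; exact hcc0 rfl
    have hαp : α ≠ p := by rintro rfl; exact hccp rfl
    have hβl : β ≠ l := by rintro rfl; exact hddl rfl
    have hβq : β ≠ q := by rintro rfl; exact hddq rfl
    obtain ⟨j, hj, hjmin⟩ := (I0.filter (fun r => α < r)).exists_min_image id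
      ⟨p, Finset.mem_filter.2 ⟨hp, by omega⟩⟩
    obtain ⟨j', hj', hjmax⟩ := (Il.filter (fun r => r < β)).exists_max_image id
      ⟨q, Finset.mem_filter.2 ⟨hq, by omega⟩⟩
    simp only [id, Finset.mem_filter] at hjmin hjmax hj hj'
    have hjp := hpmax j hj.1
    have hqj' := hqmin j' hj'.1
    have hPB : HP G (v q) (v β) (img v q j' ∪ img v β l) ∅ :=
      ((hv.seg hqj' (by omega)).joinE ((hIl j').1 hj'.1).2.symm (hv.segr hβ2 le_rfl)
        (hv.disj (by omega) le_rfl (Or.inl hj'.2))).mono rfl (Set.empty_subset _)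
    have hPB' : HP G y1 y2 (img v q j' ∪ img v β l) ∅ := by
      rcases hy with ⟨rfl, rfl⟩ | ⟨rfl, rfl⟩
      · exact hPB.symm
      · exact hPB
    have hSB : ∀ x ∈ img v q j' ∪ img v β l, x ∈ B := by
      rintro x (⟨r, h2, h3, rfl⟩ | ⟨r, h2, h3, rfl⟩)
      · exact mem_img h2 (by omega)
      · exact mem_img (by omega) h3
    have hA1 : ∀ x ∈ img v 0 α, x ∈ A := by
      rintro x ⟨r, h2, h3, rfl⟩
      exact mem_img h2 (by omega)
    have hA2 : ∀ x ∈ img v j p, x ∈ A := by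
      rintro x ⟨r, h2, h3, rfl⟩
      exact mem_img (by omega) (by omega)
    have H1 := (hv.seg (Nat.zero_le α) (by omega)).joinV hR.1
      (fun x hx hx' => hR.2.2.2.1 x hx' (hA1 x hx))
    have H2 := H1.joinV hPB' (by
      rintro x (hx | hx) hx'
      · exact absurd (hSB x hx') (hv.disj (by omega) le_rfl (by omega) x hx)
      · exact hR.2.2.2.2 x hx (hSB x hx'))
    have H3 := H2.joinV hR'.1.symm (by
      rintro x ((hx | hx) | hx) hx'
      · have := hR'.2.2.2.1 x hx' (hA1 x hx)
        subst this
        exact absurd hx (hv.disj (i := p) (j := p) (by omega) (by omega) (by omega) _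
          (mem_img le_rfl le_rfl))
      · exact absurd hx' (hRR x hx)
      · exact hR'.2.2.2.2 x hx' (hSB x hx))
    have H4 := H3.joinV (hv.segr hjp (by omega)) (by
      rintro x (((hx | hx) | hx) | hx) hx'
      · exact absurd hx' (hv.disj (by omega) (by omega) (by omega) x hx)
      · have := hR.2.2.2.1 x hx (hA2 x hx')
        subst this
        exact absurd hx' (hv.disj (i := α) (j := α) (by omega) (by omega) (by omega) _
          (mem_img le_rfl le_rfl))
      · obtain ⟨r, g1, g2, g3⟩ := hSB x hx
        obtain ⟨r', g1', g2', rfl⟩ := hx'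
        have := hv.1 _ _ (by omega) (by omega) g3
        rw [show r' = p by omega]
      · exact hR'.2.2.2.1 x hx (hA2 x hx'))
    refine full_of_cycle_set hG hk H4 ((hI0 j).1 hj.1).2.symm ?_
    have hdis : Disjoint (insert 0 I0) (Il.erase p) := by
      rw [Finset.disjoint_left]
      intro r hr hr'
      rw [Finset.mem_insert] at hr
      rw [Finset.mem_erase] at hr'
      have := hqmin r hr'.2
      rcases hr with rfl | hr
      · omega
      · have := hpmax r hr
        omega
    have hcard : 2 * k ≤ (insert 0 I0 ∪ Il.erase p).card := by
      rw [Finset.card_union_of_disjoint hdis, Finset.card_insert_of_notMem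
        (fun h => by have := h0 0 h; omega)]
      have := Finset.pred_card_le_card_erase (s := Il) (a := p)
      omega
    refine hcard.trans (hv.card_le _ _ ?_)
    intro r hr
    rw [Finset.mem_union, Finset.mem_insert, Finset.mem_erase] at hr
    rcases hr with (rfl | hr) | ⟨_, hr⟩
    · exact ⟨by omega, Or.inl (Or.inl (Or.inl (Or.inl (mem_img le_rfl (by omega)))))⟩
    · refine ⟨(h0 r hr).2, ?_⟩
      by_cases h : α < r
      · exact Or.inr (mem_img (hjmin r ⟨hr, h⟩) (hpmax r hr))
      · exact Or.inl (Or.inl (Or.inl (Or.inl (mem_img (by omega) (by omega)))))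
    · refine ⟨(h1 r hr).le, Or.inl (Or.inl (Or.inr ?_))⟩
      by_cases h : r < β
      · exact Or.inl (mem_img (hqmin r hr) (hjmax r ⟨hr, h⟩))
      · exact Or.inr (mem_img (by omega) (h1 r hr).le)
  rcases ha with rfl | rfl
  · exact final a2 d3 d3 (v q) U2 U1 hM2.symm hM1.symm (fun x h h' => hM12 x h' h) (Or.inl ⟨rfl, rfl⟩)
  · exact final a1 d3 (v q) d3 U1 U2 hM1.symm hM2.symm hM12 (Or.inr ⟨rfl, rfl⟩)

theorem dirac_full [Fintype V] (hG : TC G) {k : ℕ} (hk : 2 ≤ k) (hn : 2 * k ≤ Fintype.card V)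
    (hδ : ∀ v : V, k ≤ (G.neighborSet v).ncard) : FullC G k := by
  classical
  have : Nonempty V := by
    rw [← Fintype.card_pos_iff]; omega
  obtain ⟨v, l, hv, hmax⟩ := exists_longest (G := G)
  have hN : ∀ x e, HP G e (v 0) (img v 0 l) ∅ ∨ HP G e (v l) (img v 0 l) ∅ → G.Adj e x →
      x ∈ img v 0 l := by
    intro x e he hx
    by_contra hxn
    have hcard : (img v 0 l ∪ {x}).ncard ≤ l + 1 := by
      rcases he with he | he
      · have := (HP.single x).joinE hx.symm he (by rintro y rfl; exact hxn)
        exact Set.union_comm _ _ ▸ hmax _ _ _ _ this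
      · have := (HP.single x).joinE hx.symm he (by rintro y rfl; exact hxn)
        exact Set.union_comm _ _ ▸ hmax _ _ _ _ this
    rw [Set.union_singleton, Set.ncard_insert_of_notMem hxn] at hcard
    have := hv.ncard_img
    omega
  have hseg := (hv.seg (Nat.zero_le l) le_rfl).mono rfl (Set.empty_subset _)
  have hN0 : ∀ x, G.Adj (v 0) x → x ∈ img v 0 l := fun x hx => hN x (v 0) (Or.inr hseg) hx
  have hNl : ∀ x, G.Adj (v l) x → x ∈ img v 0 l := fun x hx => hN x (v l) (Or.inl hseg.symm) hx
  have hcount : ∀ a, (∀ x, G.Adj a x → x ∈ img v 0 l) →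
      k ≤ ((Finset.range (l + 1)).filter (fun i => G.Adj a (v i))).card := by
    intro a ha
    refine (hδ a).trans ?_
    have hsub : G.neighborSet a ⊆
        ((((Finset.range (l + 1)).filter (fun i => G.Adj a (v i))).image v : Finset V) : Set V) := by
      intro x hx
      obtain ⟨r, _, hr, rfl⟩ := ha x hx
      rw [Finset.mem_coe, Finset.mem_image]
      exact ⟨r, Finset.mem_filter.2 ⟨Finset.mem_range.2 (by omega), hx⟩, rfl⟩
    have := Set.ncard_le_ncard hsub (Set.toFinite _)
    rw [Set.ncard_coe_finset] at this
    exact this.trans Finset.card_image_le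
  have hm : ∀ a i, i ∈ (Finset.range (l + 1)).filter (fun i => G.Adj a (v i)) ↔
      i ≤ l ∧ G.Adj a (v i) := by
    intro a i
    rw [Finset.mem_filter, Finset.mem_range, Nat.lt_succ_iff]
  by_cases hex : ∃ i ∈ (Finset.range (l + 1)).filter (fun i => G.Adj (v l) (v i)),
      ∃ j ∈ (Finset.range (l + 1)).filter (fun i => G.Adj (v 0) (v i)), i < j
  · exact dirac_a hG hk hn hv hmax _ _ (hm _) (hm _) (hcount _ hN0) (hcount _ hNl) hex
  · push Not at hex
    exact dirac_b hG hk hv hN0 hNl _ _ (hm _) (hm _) (hcount _ hN0) (hcount _ hNl) hex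

end Dirac


section StateSec
variable {V : Type*} {G : SimpleGraph V}

/-- state of the climbing induction; colours `0..K` -/
structure St (G : SimpleGraph V) (W : Set V) (K : ℕ) (c : Sym2 V → ℕ) (x y : V) (Bad : Set V) :
    Prop where
  hx : x ∈ W
  hy : y ∈ W
  adj : G.Adj x y
  hc : c s(x, y) = K
  A : ∀ u ∈ W, ∀ v ∈ W, u ≠ v → s(u, v) ≠ s(x, y) →
    ∃ S E, S ⊆ W ∧ HP G u v S E ∧ s(x, y) ∈ E ∧ Cov c (K + 1) E
  B : ∃ S E, S ⊆ W ∧ HP G x y S E ∧ Cov c (K + 1) E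
  C : ∀ q ∈ W, q ∉ Bad → q ≠ x → q ≠ y → ∃ S E, S ⊆ W ∧ y ∉ S ∧ HP G x q S E ∧ Cov c K E

theorem Cov.change {c c' : Sym2 V → ℕ} {z u v : V} (hcc : ∀ e : Sym2 V, z ∉ e → c' e = c e)
    {S : Set V} {E : Set (Sym2 V)} (h : HP G u v S E) (hz : z ∉ S) {K : ℕ} (hcov : Cov c K E) :
    Cov c' K E := by
  intro i hi
  obtain ⟨e, he, h'⟩ := hcov i hi
  refine ⟨e, he, ?_⟩
  rw [hcc e (fun hze => hz (h.edge_mem he hze)), h']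

theorem St.extend {W : Set V} {K : ℕ} {c : Sym2 V → ℕ} {x y : V} {Bad : Set V}
    (h : St G W K c x y Bad) {z q q' : V} (hz : z ∉ W) (hzx : G.Adj z x) (hzy : G.Adj z y)
    (hzq : G.Adj z q) (hq : q ∈ W) (hqB : q ∉ Bad) (hqx : q ≠ x) (hqy : q ≠ y)
    (hzq' : G.Adj z q') (hq' : q' ∈ W) (hqx' : q' ≠ x) (hqy' : q' ≠ y) (hqq' : q' ≠ q) :
    ∃ c', St G (insert z W) (K + 1) c' y z ∅ := by
  classical
  set c' : Sym2 V → ℕ := fun e => if z ∈ e then (if e = s(z, x) ∨ e = s(z, q) then K else K + 1)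
    else c e with hc'
  have hcc : ∀ e : Sym2 V, z ∉ e → c' e = c e := by
    intro e he
    simp only [hc', if_neg he]
  have hcx : c' s(z, x) = K := by simp [hc']
  have hcq : c' s(z, q) = K := by simp [hc']
  have hxy := h.adj.ne
  have hcy : c' s(z, y) = K + 1 := by
    simp [hc', hxy.symm, hqy.symm]
    exact ⟨fun h => absurd h hzx.ne, fun h => absurd h hzq.ne⟩
  have hcq' : c' s(z, q') = K + 1 := by
    simp [hc', hqx', hqq']
    exact ⟨fun h => absurd h hzx.ne, fun h => absurd h hzq.ne⟩
  have key : ∀ v ∈ W, v ≠ y → ∃ S E, S ⊆ W ∧ HP G y v S E ∧ Cov c' (K + 1) E := by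
    intro v hv hvy
    by_cases hvx : v = x
    · subst hvx
      obtain ⟨S, E, h1, h2, h3⟩ := h.B
      exact ⟨S, E, h1, h2.symm, Cov.change hcc h2 (fun h => hz (h1 h)) h3⟩
    · obtain ⟨S, E, h1, h2, _, h3⟩ := h.A y h.hy v hv (Ne.symm hvy) (by
        intro h
        rw [Sym2.eq_iff] at h
        rcases h with ⟨h, _⟩ | ⟨_, h⟩
        · exact hxy h.symm
        · exact hvx h)
      exact ⟨S, E, h1, h2, Cov.change hcc h2 (fun h => hz (h1 h)) h3⟩
  have keyz : ∀ v ∈ W, v ≠ y → ∃ S E, S ⊆ insert z W ∧ HP G z v S E ∧ s(y, z) ∈ E ∧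
      Cov c' (K + 2) E := by
    intro v hv hvy
    obtain ⟨S, E, h1, h2, h3⟩ := key v hv hvy
    refine ⟨_, _, ?_, (HP.single z).joinE hzy h2 ?_, ?_, ?_⟩
    · rintro a (rfl | ha)
      · exact Or.inl rfl
      · exact Or.inr (h1 ha)
    · rintro a rfl ha; exact hz (h1 ha)
    · rw [Sym2.eq_swap (a := y)]; exact Or.inr rfl
    · intro i hi
      by_cases hiK : i = K + 1
      · exact ⟨_, Or.inr rfl, hiK ▸ hcy⟩
      · obtain ⟨e, he, hei⟩ := h3 i (by omega)
        exact ⟨e, Or.inl (Or.inr he), hei⟩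
  have keyxy : ∃ S E, S ⊆ insert z W ∧ HP G x y S E ∧ s(y, z) ∈ E ∧ Cov c' (K + 2) E := by
    obtain ⟨S, E, h1, h2, h3, h4⟩ := h.C q hq hqB hqx hqy
    have h4' := Cov.change hcc h3 (fun h => hz (h1 h)) h4
    have h5 := (h3.joinE hzq.symm (HP.single z) (by rintro a ha rfl; exact hz (h1 ha))).joinE hzy
      (HP.single y) (by
        rintro a (ha | rfl) hay
        · exact h2 (hay ▸ ha)
        · exact hzy.ne hay)
    refine ⟨_, _, ?_, h5, ?_, ?_⟩
    · rintro a ((ha | rfl) | rfl)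
      · exact Or.inr (h1 ha)
      · exact Or.inl rfl
      · exact Or.inr h.hy
    · rw [Sym2.eq_swap (a := y)]; exact Or.inr rfl
    · intro i hi
      by_cases hiK : i = K + 1
      · exact ⟨_, Or.inr rfl, hiK ▸ hcy⟩
      by_cases hiK : i = K
      · refine ⟨s(q, z), Or.inl (Or.inl (Or.inr rfl)), ?_⟩
        rw [Sym2.eq_swap, hcq, hiK]
      · obtain ⟨e, he, hei⟩ := h4' i (by omega)
        exact ⟨e, Or.inl (Or.inl (Or.inl (Or.inl he))), hei⟩
  refine ⟨c', ⟨Or.inr h.hy, Or.inl rfl, hzy.symm, by rw [Sym2.eq_swap, hcy], ?_, ?_, ?_⟩⟩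
  · intro u hu v hv huv huvyz
    by_cases huz : u = z
    · subst huz
      have hvW : v ∈ W := hv.resolve_left (Ne.symm huv)
      exact keyz v hvW (by rintro rfl; exact huvyz Sym2.eq_swap)
    by_cases hvz : v = z
    · subst hvz
      have huW : u ∈ W := hu.resolve_left huv
      obtain ⟨S, E, h1, h2, h3⟩ := keyz u huW (by rintro rfl; exact huvyz rfl)
      exact ⟨S, E, h1, h2.symm, h3⟩
    have hu := hu.resolve_left huz
    have hv := hv.resolve_left hvz
    by_cases hs : s(u, v) = s(x, y)
    · rw [Sym2.eq_iff] at hs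
      rcases hs with ⟨rfl, rfl⟩ | ⟨rfl, rfl⟩
      · exact keyxy
      · obtain ⟨S, E, h1, h2, h3⟩ := keyxy
        exact ⟨S, E, h1, h2.symm, h3⟩
    · obtain ⟨S, E, h1, h2, h3, h4⟩ := h.A u hu v hv huv hs
      have h4' := Cov.change hcc h2 (fun h => hz (h1 h)) h4
      obtain ⟨a, b, S1, S2, E1, E2, hab, g1, g2, g12, g3, g4⟩ := h2.splitE h3
      have hza : G.Adj a z ∧ G.Adj z b := by
        rw [Sym2.eq_iff] at hab
        rcases hab with ⟨rfl, rfl⟩ | ⟨rfl, rfl⟩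
        · exact ⟨hzx.symm, hzy⟩
        · exact ⟨hzy.symm, hzx⟩
      have hS1 : z ∉ S1 := fun hh => hz (h1 (g12 ▸ Or.inl hh))
      have hS2 : z ∉ S2 := fun hh => hz (h1 (g12 ▸ Or.inr hh))
      have h5 := (g1.joinE hza.1 (HP.single z) (by rintro t ht rfl; exact hS1 ht)).joinE hza.2 g2
        (by
          rintro t (ht | rfl) ht'
          · exact g3 t ht ht'
          · exact hS2 ht')
      have hmem : s(z, x) ∈ (E1 ∪ ∅ ∪ {s(a, z)}) ∪ E2 ∪ {s(z, b)} ∧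
          s(z, y) ∈ (E1 ∪ ∅ ∪ {s(a, z)}) ∪ E2 ∪ {s(z, b)} := by
        rw [Sym2.eq_iff] at hab
        rcases hab with ⟨rfl, rfl⟩ | ⟨rfl, rfl⟩
        · exact ⟨Or.inl (Or.inl (Or.inr Sym2.eq_swap)), Or.inr rfl⟩
        · exact ⟨Or.inr rfl, Or.inl (Or.inl (Or.inr Sym2.eq_swap))⟩
      refine ⟨_, _, ?_, h5, ?_, ?_⟩
      · rintro t ((ht | rfl) | ht)
        · exact Or.inr (h1 (g12 ▸ Or.inl ht))
        · exact Or.inl rfl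
        · exact Or.inr (h1 (g12 ▸ Or.inr ht))
      · rw [Sym2.eq_swap (a := y)]; exact hmem.2
      · intro i hi
        by_cases hiK : i = K + 1
        · exact ⟨_, hmem.2, hiK ▸ hcy⟩
        by_cases hiK : i = K
        · exact ⟨_, hmem.1, hiK ▸ hcx⟩
        obtain ⟨e, he, hei⟩ := h4' i (by omega)
        rcases g4 he with (he' | he') | he'
        · exact ⟨e, Or.inl (Or.inl (Or.inl (Or.inl he'))), hei⟩
        · exact ⟨e, Or.inl (Or.inr he'), hei⟩
        · exfalso
          have he'' : e = s(x, y) := he'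
          rw [he'', hcc _ (by
            rw [Sym2.mem_iff]
            rintro (rfl | rfl)
            · exact hz h.hx
            · exact hz h.hy), h.hc] at hei
          exact hiK hei.symm
  · obtain ⟨S, E, h1, h2, h3⟩ := key q' hq' hqy'
    refine ⟨_, _, ?_, h2.joinE hzq'.symm (HP.single z) ?_, ?_⟩
    · rintro a (ha | rfl)
      · exact Or.inr (h1 ha)
      · exact Or.inl rfl
    · rintro a ha rfl; exact hz (h1 ha)
    · intro i hi
      by_cases hiK : i = K + 1
      · refine ⟨_, Or.inr rfl, ?_⟩
        rw [Sym2.eq_swap, hcq', hiK]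
      · obtain ⟨e, he, hei⟩ := h3 i (by omega)
        exact ⟨e, Or.inl (Or.inl he), hei⟩
  · intro v hv _ hvy hvz
    obtain ⟨S, E, h1, h2, h3⟩ := key v (hv.resolve_left hvz) hvy
    exact ⟨S, E, fun a ha => Or.inr (h1 ha), fun h => hz (h1 h), h2, h3⟩

/-- the vertices not among `w (j+1), …, w t` -/
def Wj (w : ℕ → V) (t j : ℕ) : Set V := {v | ∀ i, j < i → i ≤ t → v ≠ w i}

theorem climb [Finite V] {k m t j0 : ℕ} (hkm : k = m + t) (hm : 1 ≤ m) (hj0 : 1 ≤ j0)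
    (hmj : 3 ≤ m + j0)
    (hδ : ∀ v : V, k ≤ (G.neighborSet v).ncard) {w : ℕ → V}
    (hinj : ∀ i j, i ≤ t → j ≤ t → w i = w j → i = j)
    (h1 : ∀ i, i < t → G.Adj (w i) (w (i + 1))) (h2 : ∀ i, i + 2 ≤ t → G.Adj (w i) (w (i + 2)))
    {c : Sym2 V → ℕ} {Bad : Set V} (hBad : Bad.ncard ≤ m - 1)
    (hst : St G (Wj w t j0) (m + j0 - 1) c (w (j0 - 1)) (w j0) Bad) :
    ∀ j, j0 ≤ j → j ≤ t → ∃ c Bad, Bad.ncard ≤ m - 1 ∧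
      St G (Wj w t j) (m + j - 1) c (w (j - 1)) (w j) Bad := by
  classical
  intro j hj
  induction j, hj using Nat.le_induction with
  | base => exact fun _ => ⟨c, Bad, hBad, hst⟩
  | succ j hj ih =>
    intro hjt
    obtain ⟨c, Bad, hBad, hst⟩ := ih (by omega)
    obtain ⟨i, rfl⟩ : ∃ i, j = i + 1 := ⟨j - 1, by omega⟩
    simp only [Nat.add_sub_cancel] at hst ⊢
    set z := w (i + 1 + 1) with hzdef
    have hz : z ∉ Wj w t (i + 1) := fun h => h (i + 1 + 1) (by omega) hjt rfl
    have hzx : G.Adj z (w i) := (h2 i (by omega)).symm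
    have hzy : G.Adj z (w (i + 1)) := (h1 (i + 1) (by omega)).symm
    have hmem : ∀ v, G.Adj z v → v ∉ w '' (Finset.Ioc (i + 1 + 1) t : Set ℕ) →
        v ∈ Wj w t (i + 1) := by
      rintro v hv hv' r hr hrt rfl
      by_cases hr' : r = i + 1 + 1
      · subst hr'; exact hv.ne rfl
      · exact hv' ⟨r, by simp; omega, rfl⟩
    have hex : ∀ F : Set V, F.ncard ≤ m + i + 1 →
        ∃ q, G.Adj z q ∧ q ∈ Wj w t (i + 1) ∧ q ∉ F := by
      intro F hF
      have hlt : (F ∪ w '' (Finset.Ioc (i + 1 + 1) t : Set ℕ)).ncard < (G.neighborSet z).ncard := by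
        refine lt_of_lt_of_le ?_ (hδ z)
        have e1 := Set.ncard_union_le F (w '' (Finset.Ioc (i + 1 + 1) t : Set ℕ))
        have e2 := Set.ncard_image_le (f := w) (Finset.finite_toSet (Finset.Ioc (i + 1 + 1) t))
        rw [Set.ncard_coe_finset, Nat.card_Ioc] at e2
        omega
      obtain ⟨q, hq, hq'⟩ := Set.exists_mem_notMem_of_ncard_lt_ncard hlt (Set.toFinite _)
      exact ⟨q, hq, hmem q hq (fun h => hq' (Or.inr h)), fun h => hq' (Or.inl h)⟩
    obtain ⟨q, hq1, hq2, hq3⟩ := hex (insert (w i) (insert (w (i + 1)) Bad)) (by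
      have e1 := Set.ncard_insert_le (w i) (insert (w (i + 1)) Bad)
      have e2 := Set.ncard_insert_le (w (i + 1)) Bad
      omega)
    obtain ⟨q', hq1', hq2', hq3'⟩ := hex {w i, w (i + 1), q} (by
      have e1 := Set.ncard_insert_le (w i) {w (i + 1), q}
      have e2 := Set.ncard_insert_le (w (i + 1)) {q}
      have e3 := Set.ncard_singleton q
      omega)
    simp only [Set.mem_insert_iff, Set.mem_singleton_iff, not_or] at hq3 hq3'
    obtain ⟨c', hc'⟩ := hst.extend hz hzx hzy hq1 hq2 hq3.2.2 hq3.1 hq3.2.1 hq1' hq2' hq3'.1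
      hq3'.2.1 hq3'.2.2
    refine ⟨c', ∅, by simp, ?_⟩
    have e1 : insert z (Wj w t (i + 1)) = Wj w t (i + 1 + 1) := by
      ext v; constructor
      · rintro (rfl | hv) r hr hrt
        · intro h
          have := hinj _ _ hjt hrt h
          omega
        · exact hv r (by omega) hrt
      · intro hv
        by_cases hvz : v = z
        · exact Or.inl hvz
        · right
          intro r hr hrt
          by_cases hr' : r = i + 1 + 1
          · subst hr'; exact hvz
          · exact hv r (by omega) hrt
    rw [e1] at hc'
    rwa [show m + (i + 1) - 1 + 1 = m + (i + 1 + 1) - 1 by omega] at hc'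

theorem climb_full [Finite V] {k m t j0 : ℕ} (hkm : k = m + t) (hm : 1 ≤ m) (hj0 : 1 ≤ j0)
    (hmj : 3 ≤ m + j0) (hjt : j0 ≤ t)
    (hδ : ∀ v : V, k ≤ (G.neighborSet v).ncard) {w : ℕ → V}
    (hinj : ∀ i j, i ≤ t → j ≤ t → w i = w j → i = j)
    (h1 : ∀ i, i < t → G.Adj (w i) (w (i + 1))) (h2 : ∀ i, i + 2 ≤ t → G.Adj (w i) (w (i + 2)))
    {c : Sym2 V → ℕ} {Bad : Set V} (hBad : Bad.ncard ≤ m - 1)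
    (hst : St G (Wj w t j0) (m + j0 - 1) c (w (j0 - 1)) (w j0) Bad) : FullC G k := by
  obtain ⟨c, Bad, _, h⟩ := climb hkm hm hj0 hmj hδ hinj h1 h2 hBad hst t hjt le_rfl
  have hu : ∀ v, v ∈ Wj w t t := fun v i h h' => by omega
  have hK : m + t - 1 + 1 = k := by omega
  refine ⟨c, ?_⟩
  intro u v huv
  by_cases hs : s(u, v) = s(w (t - 1), w t)
  · obtain ⟨S, E, _, g2, g3⟩ := h.B
    rw [hK] at g3
    rw [Sym2.eq_iff] at hs
    rcases hs with ⟨rfl, rfl⟩ | ⟨rfl, rfl⟩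
    · exact ⟨S, E, g2, g3⟩
    · exact ⟨S, E, g2.symm, g3⟩
  · obtain ⟨S, E, _, g2, _, g3⟩ := h.A u (hu u) v (hu v) huv hs
    rw [hK] at g3
    exact ⟨S, E, g2, g3⟩

/-- a squared path on `t+1` vertices -/
theorem exists_squared [Fintype V] {k t : ℕ} (hn : Fintype.card V + t = 2 * k)
    (hk : k + 1 ≤ Fintype.card V) (ht : 1 ≤ t)
    (hδ : ∀ v : V, k ≤ (G.neighborSet v).ncard) :
    ∃ w : ℕ → V, (∀ i j, i ≤ t → j ≤ t → w i = w j → i = j) ∧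
    (∀ i, i < t → G.Adj (w i) (w (i + 1))) ∧ (∀ i, i + 2 ≤ t → G.Adj (w i) (w (i + 2))) := by
  classical
  suffices H : ∀ s, 1 ≤ s → s ≤ t → ∃ w : ℕ → V, (∀ i j, i ≤ s → j ≤ s → w i = w j → i = j) ∧
    (∀ i, i < s → G.Adj (w i) (w (i + 1))) ∧ (∀ i, i + 2 ≤ s → G.Adj (w i) (w (i + 2))) from
    H t ht le_rfl
  intro s hs
  induction s, hs using Nat.le_induction with
  | base =>
    intro _
    have : Nonempty V := by rw [← Fintype.card_pos_iff]; omega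
    obtain ⟨a⟩ := this
    obtain ⟨b, hb⟩ : (G.neighborSet a).Nonempty := by
      rw [← Set.ncard_pos (Set.toFinite _)]
      have := hδ a
      omega
    have hb : G.Adj a b := hb
    refine ⟨fun i => if i = 0 then a else b, ?_, ?_, ?_⟩
    · intro i j hi hj h
      by_cases hi0 : i = 0 <;> by_cases hj0 : j = 0
      · omega
      · simp [hi0, hj0] at h; exact absurd h hb.ne
      · simp [hi0, hj0] at h; exact absurd h.symm hb.ne
      · omega
    · intro i hi
      have : i = 0 := by omega
      subst this; simpa using hb
    · intro i hi; omega
  | succ s hs ih =>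
    intro hst
    obtain ⟨w, h1, h2, h3⟩ := ih (by omega)
    obtain ⟨i, rfl⟩ : ∃ i, s = i + 1 := ⟨s - 1, by omega⟩
    -- common neighbours of w i, w (i+1)
    have hc : t ≤ (G.neighborSet (w i) ∩ G.neighborSet (w (i + 1))).ncard := by
      have e1 := Set.ncard_union_add_ncard_inter (G.neighborSet (w i)) (G.neighborSet (w (i + 1)))
      have e2 := Set.ncard_le_ncard
        (Set.subset_univ (G.neighborSet (w i) ∪ G.neighborSet (w (i + 1)))) (Set.toFinite _)
      rw [Set.ncard_univ, Nat.card_eq_fintype_card] at e2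
      have := hδ (w i)
      have := hδ (w (i + 1))
      omega
    have hlt : (w '' (Finset.range i : Set ℕ)).ncard <
        (G.neighborSet (w i) ∩ G.neighborSet (w (i + 1))).ncard := by
      have e2 := Set.ncard_image_le (f := w) (Finset.finite_toSet (Finset.range i))
      rw [Set.ncard_coe_finset, Finset.card_range] at e2
      omega
    obtain ⟨z, ⟨hz1, hz2⟩, hz'⟩ := Set.exists_mem_notMem_of_ncard_lt_ncard hlt (Set.toFinite _)
    have hz1 : G.Adj (w i) z := hz1
    have hz2 : G.Adj (w (i + 1)) z := hz2
    have hzn : ∀ r, r ≤ i + 1 → w r ≠ z := by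
      rintro r hr rfl
      by_cases e : r = i
      · subst e; exact hz1.ne rfl
      by_cases e : r = i + 1
      · subst e; exact hz2.ne rfl
      exact hz' ⟨r, by simp; omega, rfl⟩
    refine ⟨fun r => if r ≤ i + 1 then w r else z, ?_, ?_, ?_⟩
    · intro a b ha hb h
      by_cases e1 : a ≤ i + 1 <;> by_cases e2 : b ≤ i + 1 <;> simp only [e1, e2, if_true, if_false] at h
      · exact h1 a b e1 e2 h
      · exact absurd h (hzn a e1)
      · exact absurd h.symm (hzn b e2)
      · omega
    · intro a ha
      by_cases e : a = i + 1
      · subst e; simpa using hz2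
      · simp only [show a ≤ i + 1 by omega, show a + 1 ≤ i + 1 by omega, if_true]
        exact h2 a (by omega)
    · intro a ha
      by_cases e : a = i
      · subst e; simpa using hz1
      · simp only [show a ≤ i + 1 by omega, show a + 2 ≤ i + 1 by omega, if_true]
        exact h3 a (by omega)

end StateSec


section Ham
variable {V : Type*} {G : SimpleGraph V}

/-- enumeration of `W` by `0..L` -/
def Arr (W : Set V) (v : ℕ → V) (L : ℕ) : Prop :=
  (∀ i j, i ≤ L → j ≤ L → v i = v j → i = j) ∧ ∀ i, i ≤ L → v i ∈ W

theorem Arr.surj [Finite V] {W : Set V} {v : ℕ → V} {L : ℕ} (h : Arr W v L)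
    (hW : W.ncard = L + 1) : ∀ x ∈ W, ∃ r, r ≤ L ∧ v r = x := by
  have hsub : v '' (Finset.range (L + 1) : Set ℕ) ⊆ W := by
    rintro _ ⟨r, hr, rfl⟩
    exact h.2 r (by simp at hr; omega)
  have hcard : (v '' (Finset.range (L + 1) : Set ℕ)).ncard = L + 1 := by
    rw [Set.InjOn.ncard_image, Set.ncard_coe_finset, Finset.card_range]
    intro a ha b hb hab
    simp at ha hb
    exact h.1 a b (by omega) (by omega) hab
  have := Set.eq_of_subset_of_ncard_le hsub (by omega) (Set.toFinite _)
  intro x hx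
  rw [← this] at hx
  obtain ⟨r, hr, rfl⟩ := hx
  exact ⟨r, by simp at hr; omega, rfl⟩

theorem Arr.count [Finite V] {W : Set V} {v : ℕ → V} {L : ℕ} (h : Arr W v L)
    (hW : W.ncard = L + 1) (a : V) (I : Finset ℕ)
    (hI : ∀ r, r ≤ L → G.Adj a (v r) → r ∈ I) : (G.neighborSet a ∩ W).ncard ≤ I.card := by
  classical
  have hsub : G.neighborSet a ∩ W ⊆ v '' (I : Set ℕ) := by
    rintro x ⟨hx, hxW⟩
    obtain ⟨r, hr, rfl⟩ := h.surj hW x hxW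
    exact ⟨r, hI r hr hx, rfl⟩
  refine (Set.ncard_le_ncard hsub (Set.toFinite _)).trans ?_
  refine (Set.ncard_image_le (Finset.finite_toSet _)).trans ?_
  rw [Set.ncard_coe_finset]

theorem exists_arr [Finite V] {W : Set V} {L : ℕ} (hW : W.ncard = L + 1) {x y : V} (hx : x ∈ W)
    (hy : y ∈ W) (hxy : x ≠ y) : ∃ v, Arr W v L ∧ v 0 = x ∧ v L = y := by
  classical
  have hfin : (W \ {x, y}).Finite := Set.toFinite _
  set l := hfin.toFinset.toList with hl
  have hlen : l.length + 2 = L + 1 := by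
    rw [hl, Finset.length_toList, ← Set.ncard_eq_toFinset_card _ hfin]
    have := Set.ncard_sdiff_add_ncard_of_subset (s := {x, y}) (t := W) (by
      rintro z (rfl | rfl)
      · exact hx
      · exact hy) 
    rw [Set.ncard_pair hxy] at this
    omega
  have hmem : ∀ z, z ∈ l ↔ z ∈ W ∧ z ≠ x ∧ z ≠ y := by
    intro z
    rw [hl, Finset.mem_toList, Set.Finite.mem_toFinset]
    simp
  set M := x :: (l ++ [y]) with hM
  have hnd : M.Nodup := by
    rw [hM, List.nodup_cons, List.nodup_append]
    refine ⟨?_, Finset.nodup_toList _, by simp, ?_⟩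
    · simp [hmem, hxy]
    · intro a ha b hb
      rw [List.mem_singleton] at hb
      subst hb
      exact ((hmem a).1 ha).2.2
  have hML : M.length = L + 1 := by simp [hM]; omega
  have hget : ∀ i (hi : i < M.length), M.getD i x = M[i] := by
    intro i hi
    rw [List.getD_eq_getElem _ _ hi]
  refine ⟨fun i => M.getD i x, ⟨?_, ?_⟩, ?_, ?_⟩
  · intro i j hi hj hij
    simp only [hget i (by omega), hget j (by omega)] at hij
    exact (hnd.getElem_inj_iff).1 hij
  · intro i hi
    simp only [hget i (by omega)]
    have hMW : ∀ z ∈ M, z ∈ W := by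
      intro z this
      rw [hM, List.mem_cons, List.mem_append, List.mem_singleton, hmem] at this
      rcases this with h | h | h
      · exact h ▸ hx
      · exact h.1
      · exact h ▸ hy
    exact hMW _ (List.getElem_mem _)
  · simp [hM]
  · simp only [hget L (by omega)]
    have : L = (x :: l).length := by simp; omega
    have h2 : M = (x :: l) ++ [y] := by simp [hM]
    simp only [h2, this]
    simp

open Classical in
/-- positions of nonadjacent consecutive pairs -/
noncomputable def gaps (G : SimpleGraph V) (v : ℕ → V) (L : ℕ) : Finset ℕ :=
  (Finset.range L).filter (fun i => ¬ G.Adj (v i) (v (i + 1)))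

theorem mem_gaps {v : ℕ → V} {L i : ℕ} : i ∈ gaps G v L ↔ i < L ∧ ¬ G.Adj (v i) (v (i + 1)) := by
  classical
  unfold gaps
  simp only [Finset.mem_filter, Finset.mem_range]

theorem gap_step {W : Set V} {v : ℕ → V} {L : ℕ} (h : Arr W v L) {a b i : ℕ} (hab : a < b)
    (hb : b < L) (h1 : G.Adj (v a) (v b)) (h2 : G.Adj (v (a + 1)) (v (b + 1)))
    (hi : i = a ∨ i = b) (hig : i ∈ gaps G v L) :
    ∃ v', Arr W v' L ∧ v' 0 = v 0 ∧ v' L = v L ∧ (gaps G v' L).card < (gaps G v L).card := by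
  classical
  set σ : ℕ → ℕ := fun r => if a < r ∧ r ≤ b then a + 1 + b - r else r with hσ
  have hσL : ∀ r, r ≤ L → σ r ≤ L := by
    intro r hr; simp only [hσ]; split_ifs <;> omega
  have hσi : ∀ r s, σ r = σ s → r = s := by
    intro r s; simp only [hσ]; split_ifs <;> omega
  refine ⟨fun r => v (σ r), ⟨?_, ?_⟩, ?_, ?_, ?_⟩
  · intro r s hr hs hrs
    exact hσi _ _ (h.1 _ _ (hσL r hr) (hσL s hs) hrs)
  · intro r hr; exact h.2 _ (hσL r hr)
  · have : σ 0 = 0 := by simp [hσ]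
    simp [this]
  · have : σ L = L := by simp only [hσ]; split_ifs <;> omega
    simp [this]
  · set τ : ℕ → ℕ := fun r => if a < r ∧ r < b then a + b - r else r with hτ
    have hτi : ∀ r s, τ r = τ s → r = s := by
      intro r s; simp only [hτ]; split_ifs <;> omega
    have hsub : (gaps G (fun r => v (σ r)) L).image τ ⊆ (gaps G v L).erase i := by
      intro s hs
      rw [Finset.mem_image] at hs
      obtain ⟨r, hr, rfl⟩ := hs
      rw [mem_gaps] at hr
      obtain ⟨hrL, hr⟩ := hr
      rw [Finset.mem_erase, mem_gaps]
      have hra : r ≠ a := by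
        rintro rfl
        apply hr
        have e1 : σ r = r := by simp only [hσ]; split_ifs <;> omega
        have e2 : σ (r + 1) = b := by simp only [hσ]; split_ifs <;> omega
        simp only [e1, e2]; exact h1
      have hrb : r ≠ b := by
        rintro rfl
        apply hr
        have e1 : σ r = a + 1 := by simp only [hσ]; split_ifs <;> omega
        have e2 : σ (r + 1) = r + 1 := by simp only [hσ]; split_ifs <;> omega
        simp only [e1, e2]; exact h2
      by_cases hin : a < r ∧ r < b
      · have e0 : τ r = a + b - r := by simp only [hτ, if_pos hin]
        have e1 : σ r = a + b - r + 1 := by simp only [hσ]; split_ifs <;> omega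
        have e2 : σ (r + 1) = a + b - r := by simp only [hσ]; split_ifs <;> omega
        simp only [e1, e2] at hr
        rw [e0]
        exact ⟨by omega, by omega, fun h => hr h.symm⟩
      · have e0 : τ r = r := by simp only [hτ, if_neg hin]
        have e1 : σ r = r := by simp only [hσ]; split_ifs <;> omega
        have e2 : σ (r + 1) = r + 1 := by simp only [hσ]; split_ifs <;> omega
        simp only [e1, e2] at hr
        rw [e0]
        exact ⟨by omega, hrL, hr⟩
    have hc := Finset.card_le_card hsub
    rw [Finset.card_image_of_injective _ (fun r s => hτi r s), Finset.card_erase_of_mem hig] at hc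
    have := Finset.card_pos.2 ⟨i, hig⟩
    omega

theorem exists_ham [Finite V] {W : Set V} {m : ℕ} (hm : 1 ≤ m) (hW : W.ncard = 2 * m + 1)
    (hdeg : ∀ a ∈ W, m + 1 ≤ (G.neighborSet a ∩ W).ncard) {x y : V} (hx : x ∈ W)
    (hy : y ∈ W) (hxy : x ≠ y) :
    ∃ v, Arr W v (2 * m) ∧ Sq G v (2 * m) ∧ v 0 = x ∧ v (2 * m) = y := by
  classical
  obtain ⟨v0, h0, h0x, h0y⟩ := exists_arr hW hx hy hxy
  suffices H : ∀ n, ∀ v, Arr W v (2 * m) → v 0 = x → v (2 * m) = y → (gaps G v (2 * m)).card = n →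
      ∃ v, Arr W v (2 * m) ∧ Sq G v (2 * m) ∧ v 0 = x ∧ v (2 * m) = y from
    H _ v0 h0 h0x h0y rfl
  intro n
  induction n using Nat.strong_induction_on with
  | _ n ih =>
  intro v hv hvx hvy hn
  by_cases hg : gaps G v (2 * m) = ∅
  · refine ⟨v, hv, ⟨hv.1, ?_⟩, hvx, hvy⟩
    intro i hi
    by_contra h
    have : i ∈ gaps G v (2 * m) := mem_gaps.2 ⟨hi, h⟩
    rw [hg] at this
    simp at this
  · obtain ⟨i, hi⟩ := Finset.nonempty_iff_ne_empty.2 hg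
    have hi' := mem_gaps.1 hi
    have hstep : ∀ v', Arr W v' (2 * m) → v' 0 = v 0 → v' (2 * m) = v (2 * m) →
        (gaps G v' (2 * m)).card < (gaps G v (2 * m)).card →
        ∃ v, Arr W v (2 * m) ∧ Sq G v (2 * m) ∧ v 0 = x ∧ v (2 * m) = y := by
      intro v' h1 h2 h3 h4
      exact ih _ (by omega) v' h1 (h2.trans hvx) (h3.trans hvy) rfl
    set J1 := (Finset.range (2 * m)).filter (fun j => G.Adj (v i) (v j)) with hJ1
    set J2 := (Finset.range (2 * m)).filter (fun j => G.Adj (v (i + 1)) (v (j + 1))) with hJ2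
    have c1 : m ≤ J1.card := by
      have e1 := hv.count (G := G) hW (v i) (insert (2 * m) J1) (by
        intro r hr hadj
        rw [Finset.mem_insert]
        by_cases h : r = 2 * m
        · exact Or.inl h
        · right; rw [hJ1, Finset.mem_filter, Finset.mem_range]; exact ⟨by omega, hadj⟩)
      have e2 := hdeg (v i) (hv.2 i (by omega))
      have e3 := Finset.card_insert_le (2 * m) J1
      omega
    have c2 : m ≤ J2.card := by
      have e1 := hv.count (G := G) hW (v (i + 1)) (insert 0 (J2.image (fun r => r + 1))) (by
        intro r hr hadj
        rw [Finset.mem_insert]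
        by_cases h : r = 0
        · exact Or.inl h
        · right
          rw [Finset.mem_image]
          refine ⟨r - 1, ?_, by omega⟩
          rw [hJ2, Finset.mem_filter, Finset.mem_range, show r - 1 + 1 = r by omega]
          exact ⟨by omega, hadj⟩)
      have e2 := hdeg (v (i + 1)) (hv.2 (i + 1) (by omega))
      have e3 := Finset.card_insert_le 0 (J2.image (fun r => r + 1))
      have e4 := Finset.card_image_le (s := J2) (f := fun r => r + 1)
      omega
    obtain ⟨j, hj1, hj2⟩ : ∃ j, j ∈ J1 ∧ j ∈ J2 := by
      by_contra hno
      push Not at hno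
      have hd : Disjoint J1 J2 := Finset.disjoint_left.2 hno
      have e1 : J1 ∪ J2 ⊆ (Finset.range (2 * m)).erase i := by
        intro j hj
        rw [Finset.mem_erase, Finset.mem_range]
        rw [Finset.mem_union, hJ1, hJ2, Finset.mem_filter, Finset.mem_filter, Finset.mem_range] at hj
        rcases hj with hj | hj
        · exact ⟨by rintro rfl; exact hj.2.ne rfl, hj.1⟩
        · exact ⟨by rintro rfl; exact hj.2.ne rfl, hj.1⟩
      have e2 := Finset.card_le_card e1
      rw [Finset.card_union_of_disjoint hd, Finset.card_erase_of_mem (Finset.mem_range.2 hi'.1),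
        Finset.card_range] at e2
      omega
    rw [hJ1, Finset.mem_filter, Finset.mem_range] at hj1
    rw [hJ2, Finset.mem_filter, Finset.mem_range] at hj2
    rcases lt_trichotomy i j with hij | hij | hij
    · obtain ⟨v', g1, g2, g3, g4⟩ := gap_step hv hij hj1.1 hj1.2 hj2.2 (Or.inl rfl) hi
      exact hstep v' g1 g2 g3 g4
    · subst hij; exact absurd rfl hj1.2.ne
    · obtain ⟨v', g1, g2, g3, g4⟩ := gap_step hv hij hi'.1 hj1.2.symm hj2.2.symm (Or.inr rfl) hi
      exact hstep v' g1 g2 g3 g4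

end Ham


section Base
variable {V : Type*} {G : SimpleGraph V}

theorem Arr.img_sub {W : Set V} {v : ℕ → V} {L : ℕ} (h : Arr W v L) {i j : ℕ} (hj : j ≤ L) :
    img v i j ⊆ W := by
  rintro _ ⟨r, _, hr, rfl⟩
  exact h.2 r (by omega)

/-- the cycle edges carry the colours `col 0, …, col (m-1)` twice around -/
def CycCol (v : ℕ → V) (m : ℕ) (c : Sym2 V → ℕ) (col : ℕ → ℕ) : Prop :=
  ∀ i, i < m → c s(v i, v (i + 1)) = col i ∧ c s(v (i + m), v (i + m + 1)) = col i

theorem CycCol.seg {v : ℕ → V} {m : ℕ} {c : Sym2 V → ℕ} {col : ℕ → ℕ} (h : CycCol v m c col)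
    {a b : ℕ} (hab : a + m ≤ b) (hb : b ≤ 2 * m) :
    ∀ i, i < m → ∃ e ∈ edg v a b, c e = col i := by
  intro i hi
  by_cases hai : a ≤ i
  · exact ⟨_, mem_edg hai (by omega), (h i hi).1⟩
  · exact ⟨_, mem_edg (r := i + m) (by omega) (by omega), (h i hi).2⟩

theorem pathA {W : Set V} {v : ℕ → V} {m : ℕ} (hv : Sq G v (2 * m)) (hA : Arr W v (2 * m))
    [Finite V] (hW : W.ncard = 2 * m + 1) (hdeg : ∀ a ∈ W, m + 1 ≤ (G.neighborSet a ∩ W).ncard)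
    (h0 : G.Adj (v 0) (v (2 * m))) {c : Sym2 V → ℕ} {col : ℕ → ℕ} (hc : CycCol v m c col)
    {s g : ℕ} (hsg : s + m + 1 ≤ g) (hg : g + 1 ≤ 2 * m)
    (hx : G.Adj (v (s + 1)) (v (s + m + 1)) → ∀ j, s + m + 2 ≤ j → j ≤ 2 * m →
      c s(v (s + m), v j) = col s) :
    ∃ S E, S ⊆ W ∧ HP G (v s) (v g) S E ∧ s(v 0, v (2 * m)) ∈ E ∧
      ∀ i, i < m → ∃ e ∈ E, c e = col i := by
  classical
  have T1 : ∀ i j, s < i → i + m ≤ g → g < j → j ≤ 2 * m → G.Adj (v i) (v j) →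
      ∃ S E, S ⊆ W ∧ HP G (v s) (v g) S E ∧ s(v 0, v (2 * m)) ∈ E ∧
      ∀ i, i < m → ∃ e ∈ E, c e = col i := by
    intro i j h1 h2 h3 h4 hadj
    refine ⟨_, _, ?_, (hv.segr (Nat.zero_le s) (by omega)).joinE h0
      ((hv.segr h4 le_rfl).joinE hadj.symm (hv.seg (show i ≤ g by omega) (by omega))
        (hv.disj le_rfl (by omega) (by omega)))
      (hv.disj3 (by omega) (by omega) (by omega) (by omega) (by omega)), ?_, ?_⟩
    · refine Set.union_subset (hA.img_sub (by omega)) (Set.union_subset (hA.img_sub (by omega))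
        (hA.img_sub (by omega)))
    · exact Or.inr rfl
    · intro a ha
      obtain ⟨e, he, hce⟩ := hc.seg h2 (by omega) a ha
      exact ⟨e, Or.inl (Or.inr (Or.inl (Or.inr he))), hce⟩
  by_cases hIA : ∃ r, g < r ∧ r ≤ 2 * m ∧ G.Adj (v (s + 1)) (v r)
  · obtain ⟨r, h1, h2, h3⟩ := hIA
    exact T1 (s + 1) r (by omega) (by omega) h1 h2 h3
  push Not at hIA
  -- counting
  set IA := (Finset.range (g + 1)).filter (fun r => G.Adj (v (s + 1)) (v r) ∧ r ≠ s) with hIAd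
  set IB := (Finset.range (2 * m + 1)).filter (fun r => G.Adj (v (g + 1)) (v r)) with hIBd
  have cA : m ≤ IA.card := by
    have e1 := hA.count (G := G) hW (v (s + 1)) (insert s IA) (by
      intro r hr hadj
      rw [Finset.mem_insert]
      by_cases h : r = s
      · exact Or.inl h
      · right
        rw [hIAd, Finset.mem_filter, Finset.mem_range]
        refine ⟨?_, hadj, h⟩
        by_contra hgr
        exact hIA r (by omega) hr hadj)
    have e2 := hdeg (v (s + 1)) (hA.2 _ (by omega))
    have e3 := Finset.card_insert_le s IA
    omega
  have cB : m + 1 ≤ IB.card := by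
    have e1 := hA.count (G := G) hW (v (g + 1)) IB (by
      intro r hr hadj
      rw [hIBd, Finset.mem_filter, Finset.mem_range]
      exact ⟨by omega, hadj⟩)
    have e2 := hdeg (v (g + 1)) (hA.2 _ (by omega))
    omega
  set φ : ℕ → ℕ := fun p => if p < s then p + 1 else p - 1 with hφ
  have hIAne : ∀ p ∈ IA, p ≠ s ∧ p ≠ s + 1 ∧ p ≤ g ∧ G.Adj (v (s + 1)) (v p) := by
    intro p hp
    rw [hIAd, Finset.mem_filter, Finset.mem_range] at hp
    refine ⟨hp.2.2, ?_, by omega, hp.2.1⟩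
    rintro rfl
    exact hp.2.1.ne rfl
  have cφ : (IA.image φ).card = IA.card := by
    apply Finset.card_image_of_injOn
    intro p hp q hq hpq
    have h1 := hIAne p hp
    have h2 := hIAne q hq
    simp only [hφ] at hpq
    split_ifs at hpq <;> omega
  obtain ⟨y, hyA, hyB⟩ : ∃ y, y ∈ IA.image φ ∧ y ∈ IB := by
    by_contra hno
    push Not at hno
    have hd : Disjoint (IA.image φ) IB := Finset.disjoint_left.2 hno
    have e1 : IA.image φ ∪ IB ⊆ (Finset.range (2 * m + 1)).erase (g + 1) := by
      intro j hj
      rw [Finset.mem_erase, Finset.mem_range]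
      rw [Finset.mem_union, Finset.mem_image] at hj
      rcases hj with ⟨p, hp, rfl⟩ | hj
      · have h1 := hIAne p hp
        simp only [hφ]
        split_ifs <;> omega
      · rw [hIBd, Finset.mem_filter, Finset.mem_range] at hj
        exact ⟨by rintro rfl; exact hj.2.ne rfl, hj.1⟩
    have e2 := Finset.card_le_card e1
    rw [Finset.card_union_of_disjoint hd, Finset.card_erase_of_mem (Finset.mem_range.2 (by omega)),
      Finset.card_range] at e2
    omega
  rw [Finset.mem_image] at hyA
  obtain ⟨p, hp, hpy⟩ := hyA
  rw [hIBd, Finset.mem_filter, Finset.mem_range] at hyB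
  obtain ⟨hyl, hyB⟩ := hyB
  obtain ⟨hp1, hp2, hp3, hp4⟩ := hIAne p hp
  simp only [hφ] at hpy
  by_cases hps : p < s
  · -- T2
    rw [if_pos hps] at hpy
    subst hpy
    have q1 := (hv.seg (Nat.zero_le p) (by omega)).joinE hp4.symm
      (hv.seg (show s + 1 ≤ g by omega) (by omega)) (hv.disj (by omega) (by omega) (by omega))
    have q2 := (hv.seg (show g + 1 ≤ 2 * m by omega) le_rfl).joinE h0.symm q1
      (hv.disj3 le_rfl (by omega) (by omega) (by omega) (by omega))
    have q3 := (hv.segr (show p + 1 ≤ s by omega) (by omega)).joinE hyB.symm q2 (by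
      rintro x hx (hx' | hx')
      · exact hv.disj (by omega) le_rfl (by omega) x hx hx'
      · exact hv.disj3 (by omega) (by omega) (by omega) (by omega) (by omega) x hx hx')
    refine ⟨_, _, ?_, q3, ?_, ?_⟩
    · exact Set.union_subset (hA.img_sub (by omega)) (Set.union_subset (hA.img_sub (by omega))
        (Set.union_subset (hA.img_sub (by omega)) (hA.img_sub (by omega))))
    · exact Or.inl (Or.inr (Or.inr (Sym2.eq_swap)))
    · intro a ha
      obtain ⟨e, he, hce⟩ := hc.seg (show s + 1 + m ≤ g by omega) (by omega) a ha
      exact ⟨e, Or.inl (Or.inr (Or.inl (Or.inr (Or.inl (Or.inr he))))), hce⟩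
  · rw [if_neg hps] at hpy
    have hpy' : p = y + 1 := by omega
    subst hpy'
    by_cases hyg : y + m ≤ g
    · exact T1 y (g + 1) (by omega) hyg (by omega) hg hyB.symm
    · -- T3
      have q1 := (hv.segr (show s + 1 ≤ y by omega) (by omega)).joinE hp4
        (hv.seg hp3 (by omega)) (hv.disj (by omega) (by omega) (by omega))
      have q2 := (hv.segr hg le_rfl).joinE hyB q1
        (hv.disj3 le_rfl (by omega) (by omega) (by omega) (by omega))
      have q3 := (hv.segr (Nat.zero_le s) (by omega)).joinE h0 q2 (by
        rintro x hx (hx' | hx')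
        · exact hv.disj (by omega) le_rfl (by omega) x hx hx'
        · exact hv.disj3 (by omega) (by omega) (by omega) (by omega) (by omega) x hx hx')
      have key : ∀ r, r < 2 * m → r ≠ s → r ≠ y → r ≠ g → s(v r, v (r + 1)) ∈
          edg v 0 s ∪ (edg v (g + 1) (2 * m) ∪ (edg v (s + 1) y ∪ edg v (y + 1) g ∪
          {s(v (s + 1), v (y + 1))}) ∪ {s(v (g + 1), v y)}) ∪ {s(v 0, v (2 * m))} := by
        intro r hr h1 h2 h3
        left
        by_cases a1 : r < s
        · exact Or.inl (mem_edg (Nat.zero_le _) a1)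
        right; left
        by_cases a2 : g + 1 ≤ r
        · exact Or.inl (mem_edg a2 hr)
        right; left
        by_cases a3 : r < y
        · exact Or.inl (mem_edg (by omega) a3)
        · exact Or.inr (mem_edg (by omega) (by omega))
      refine ⟨_, _, ?_, q3, ?_, ?_⟩
      · exact Set.union_subset (hA.img_sub (by omega)) (Set.union_subset (hA.img_sub (by omega))
          (Set.union_subset (hA.img_sub (by omega)) (hA.img_sub (by omega))))
      · exact Or.inr rfl
      · intro a ha
        by_cases has : a ≠ s ∧ a ≠ y ∧ a ≠ g
        · exact ⟨_, key a (by omega) has.1 has.2.1 has.2.2, (hc a ha).1⟩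
        · by_cases ham : a + m ≠ s ∧ a + m ≠ y ∧ a + m ≠ g
          · exact ⟨_, key (a + m) (by omega) ham.1 ham.2.1 ham.2.2, (hc a ha).2⟩
          · have hay : a = s ∧ y = s + m := by omega
            obtain ⟨rfl, rfl⟩ := hay
            refine ⟨s(v (g + 1), v (a + m)), Or.inl (Or.inr (Or.inr rfl)), ?_⟩
            rw [Sym2.eq_swap]
            exact hx hp4 (g + 1) (by omega) hg

theorem Sq.mirror {v : ℕ → V} {L : ℕ} (h : Sq G v L) : Sq G (fun i => v (L - i)) L := by
  refine ⟨?_, ?_⟩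
  · intro i j hi hj hij
    have := h.1 _ _ (by omega) (by omega) hij
    omega
  · intro i hi
    have := h.2 (L - (i + 1)) (by omega)
    rw [show L - (i + 1) + 1 = L - i by omega] at this
    exact this.symm

theorem Arr.mirror {W : Set V} {v : ℕ → V} {L : ℕ} (h : Arr W v L) :
    Arr W (fun i => v (L - i)) L := by
  refine ⟨?_, fun i hi => h.2 _ (by omega)⟩
  intro i j hi hj hij
  have := h.1 _ _ (by omega) (by omega) hij
  omega

theorem CycCol.mirror {v : ℕ → V} {m : ℕ} {c : Sym2 V → ℕ} {col : ℕ → ℕ} (h : CycCol v m c col) :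
    CycCol (fun i => v (2 * m - i)) m c (fun i => col (m - 1 - i)) := by
  intro i hi
  have := h (m - 1 - i) (by omega)
  beta_reduce
  refine ⟨?_, ?_⟩
  · rw [← this.2, Sym2.eq_swap, show 2 * m - (i + 1) = m - 1 - i + m by omega,
      show 2 * m - i = m - 1 - i + m + 1 by omega]
  · rw [← this.1, Sym2.eq_swap, show 2 * m - (i + m + 1) = m - 1 - i by omega,
      show 2 * m - (i + m) = m - 1 - i + 1 by omega]

theorem base_st {W : Set V} {v : ℕ → V} {m : ℕ} (hm : 2 ≤ m) (hv : Sq G v (2 * m))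
    (hA : Arr W v (2 * m))
    [Finite V] (hW : W.ncard = 2 * m + 1) (hdeg : ∀ a ∈ W, m + 1 ≤ (G.neighborSet a ∩ W).ncard)
    (h0 : G.Adj (v 0) (v (2 * m))) :
    ∃ c Bad, Bad.ncard ≤ m - 1 ∧ St G W m c (v 0) (v (2 * m)) Bad := by
  classical
  suffices H : ∃ c : Sym2 V → ℕ, c s(v 0, v (2 * m)) = m ∧ CycCol v m c id ∧
      (∀ s, s + 2 ≤ m → G.Adj (v (s + 1)) (v (s + m + 1)) → ∀ j, s + m + 2 ≤ j → j ≤ 2 * m →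
        c s(v (s + m), v j) = s) ∧
      (G.Adj (v (m - 1)) (v (2 * m - 1)) → ∀ j, j + 2 ≤ m → c s(v j, v m) = m - 1) ∧
      ∃ S E, S ⊆ W ∧ HP G (v 0) (v (2 * m)) S E ∧ Cov c (m + 1) E by
    obtain ⟨c, hcm, hcyc, hR, hL, hB⟩ := H
    have hfin : ∀ {E : Set (Sym2 V)}, s(v 0, v (2 * m)) ∈ E → (∀ i, i < m → ∃ e ∈ E, c e = i) →
        Cov c (m + 1) E := by
      intro E h1 h2 i hi
      by_cases him : i = m
      · exact ⟨_, h1, by rw [hcm, him]⟩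
      · exact h2 i (by omega)
    have hAs : ∀ s g, s < g → g ≤ 2 * m → ¬ (s = 0 ∧ g = 2 * m) →
        ∃ S E, S ⊆ W ∧ HP G (v s) (v g) S E ∧ s(v 0, v (2 * m)) ∈ E ∧ Cov c (m + 1) E := by
      intro s g hsg hg hne
      by_cases h1 : g ≤ s + m
      · refine ⟨_, _, ?_, (hv.segr (Nat.zero_le s) (by omega)).joinE h0 (hv.segr hg le_rfl)
          (hv.disj (by omega) le_rfl (by omega)), Or.inr rfl, hfin (Or.inr rfl) ?_⟩
        · exact Set.union_subset (hA.img_sub (by omega)) (hA.img_sub (by omega))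
        · intro i hi
          by_cases his : i < s
          · exact ⟨_, Or.inl (Or.inl (mem_edg (Nat.zero_le _) his)), (hcyc i hi).1⟩
          · exact ⟨_, Or.inl (Or.inr (mem_edg (r := i + m) (by omega) (by omega))), (hcyc i hi).2⟩
      · by_cases h2 : g = 2 * m
        · subst h2
          obtain ⟨S, E, g1, g2, g3, g4⟩ := pathA (s := 0) (g := 2 * m - s) hv.mirror hA.mirror hW
            hdeg (by simpa using h0.symm) hcyc.mirror (by omega) (by omega) (by
              intro hadj j hj1 hj2
              simp only [Nat.zero_add] at hadj ⊢
              have := hL (by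
                rw [show m - 1 = 2 * m - (m + 1) by omega]; exact hadj.symm) (2 * m - j) (by omega)
              rw [show 2 * m - m = m by omega, Sym2.eq_swap, this]
              simp)
          simp only [Nat.sub_zero, Nat.sub_self] at g2 g3
          rw [show 2 * m - (2 * m - s) = s by omega] at g2
          rw [Sym2.eq_swap] at g3
          refine ⟨S, E, g1, g2.symm, g3, hfin g3 ?_⟩
          intro i hi
          obtain ⟨e, he, hce⟩ := g4 (m - 1 - i) (by omega)
          refine ⟨e, he, hce.trans ?_⟩
          simp only [id]; omega
        · obtain ⟨S, E, g1, g2, g3, g4⟩ := pathA (s := s) (g := g) hv hA hW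
            hdeg h0 hcyc (by omega) (by omega) (hR s (by omega))
          exact ⟨S, E, g1, g2, g3, hfin g3 g4⟩
    refine ⟨c, img v 1 (m - 1), ?_, ⟨hA.2 _ (by omega), hA.2 _ le_rfl, h0, hcm, ?_, hB, ?_⟩⟩
    · have hsub : img v 1 (m - 1) ⊆ v '' (Finset.Icc 1 (m - 1) : Set ℕ) := by
        rintro _ ⟨r, h1, h2, rfl⟩
        exact ⟨r, by simp; omega, rfl⟩
      refine (Set.ncard_le_ncard hsub (Set.toFinite _)).trans ?_
      refine (Set.ncard_image_le (Finset.finite_toSet _)).trans ?_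
      rw [Set.ncard_coe_finset]; simp
    · intro a ha b hb hab hne
      obtain ⟨s, hs, rfl⟩ := hA.surj hW a ha
      obtain ⟨g, hg, rfl⟩ := hA.surj hW b hb
      rcases lt_trichotomy s g with h | h | h
      · exact hAs s g h hg (by rintro ⟨rfl, rfl⟩; exact hne rfl)
      · subst h; exact absurd rfl hab
      · obtain ⟨S, E, g1, g2, g3⟩ := hAs g s h hs (by rintro ⟨rfl, rfl⟩; exact hne Sym2.eq_swap)
        exact ⟨S, E, g1, g2.symm, g3⟩
    · intro q hq hqB hqx hqy
      obtain ⟨r, hr, rfl⟩ := hA.surj hW q hq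
      have hr0 : r ≠ 0 := by rintro rfl; exact hqx rfl
      have hr1 : r ≠ 2 * m := by rintro rfl; exact hqy rfl
      have hrm : m ≤ r := by
        by_contra h
        exact hqB (mem_img (by omega) (by omega))
      refine ⟨_, _, hA.img_sub hr, ?_, hv.seg (Nat.zero_le r) hr, hcyc.seg (by omega) hr⟩
      rintro ⟨i, h1, h2, h3⟩
      have := hv.1 _ _ (by omega) le_rfl h3
      omega
  by_cases hanti : ∃ i, 1 ≤ i ∧ i + 1 ≤ m ∧ G.Adj (v i) (v (i + m))
  · obtain ⟨c, hc⟩ := exists_col v (2 * m) hv.1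
      (fun i j => if m ≤ i then i - m else if j ≤ m then j - 1 else m)
    have hcyc : CycCol v m c id := by
      intro i hi
      rw [hc i (i + 1) (by omega) (by omega), hc (i + m) (i + m + 1) (by omega) (by omega)]
      simp only [id]
      constructor <;> split_ifs <;> omega
    refine ⟨c, ?_, hcyc, ?_, ?_, ?_⟩
    · rw [hc 0 (2 * m) (by omega) le_rfl]
      split_ifs <;> omega
    · intro s hs _ j hj1 hj2
      rw [hc (s + m) j (by omega) hj2]
      split_ifs <;> omega
    · intro _ j hj
      rw [hc j m (by omega) (by omega)]
      split_ifs <;> omega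
    · obtain ⟨i, hi1, hi2, hadj⟩ := hanti
      refine ⟨_, _, ?_, (hv.seg (Nat.zero_le i) (by omega)).joinE hadj
        (hv.seg (show i + m ≤ 2 * m by omega) le_rfl) (hv.disj (by omega) le_rfl (by omega)), ?_⟩
      · exact Set.union_subset (hA.img_sub (by omega)) (hA.img_sub (by omega))
      · intro a ha
        by_cases ham : a = m
        · refine ⟨_, Or.inr rfl, ?_⟩
          rw [hc i (i + m) (by omega) (by omega)]
          split_ifs <;> omega
        · by_cases hai : a < i
          · exact ⟨_, Or.inl (Or.inl (mem_edg (Nat.zero_le _) hai)), (hcyc a (by omega)).1⟩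
          · exact ⟨_, Or.inl (Or.inr (mem_edg (r := a + m) (by omega) (by omega))),
              (hcyc a (by omega)).2⟩
  · push Not at hanti
    obtain ⟨c, hc⟩ := exists_col v (2 * m) hv.1
      (fun i j => if j = i + 1 then (if m ≤ i then i - m else i) else m)
    have hcyc : CycCol v m c id := by
      intro i hi
      rw [hc i (i + 1) (by omega) (by omega), hc (i + m) (i + m + 1) (by omega) (by omega)]
      simp only [id]
      constructor <;> split_ifs <;> omega
    refine ⟨c, ?_, hcyc, ?_, ?_, ?_⟩
    · rw [hc 0 (2 * m) (by omega) le_rfl]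
      split_ifs <;> omega
    · intro s hs hadj
      refine absurd ?_ (hanti (s + 1) (by omega) (by omega))
      rw [show s + 1 + m = s + m + 1 by omega]; exact hadj
    · intro hadj
      refine absurd ?_ (hanti (m - 1) (by omega) (by omega))
      rw [show m - 1 + m = 2 * m - 1 by omega]; exact hadj
    · obtain ⟨j, hj1, hj2, hj3, hadj⟩ : ∃ j, j ≤ 2 * m ∧ j ≠ m - 1 ∧ j ≠ m + 1 ∧
          G.Adj (v m) (v j) := by
        by_contra hno
        push Not at hno
        have e1 := hA.count (G := G) hW (v m) {m - 1, m + 1} (by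
          intro r hr hadj
          by_contra hr'
          simp only [Finset.mem_insert, Finset.mem_singleton, not_or] at hr'
          exact hno r hr hr'.1 hr'.2 hadj)
        have e2 := hdeg (v m) (hA.2 m (by omega))
        have e3 := Finset.card_le_two (a := m - 1) (b := m + 1)
        omega
      have hjm : j ≠ m := by rintro rfl; exact hadj.ne rfl
      have hcovm : ∀ {E : Set (Sym2 V)} {e : Sym2 V}, e ∈ E → c e = m →
          (∀ i, i < m → ∃ e ∈ E, c e = i) → Cov c (m + 1) E := by
        intro E e h1 h3 h2 i hi
        by_cases him : i = m
        · exact ⟨_, h1, by rw [h3, him]⟩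
        · exact h2 i (by omega)
      by_cases hlt : j < m
      · refine ⟨_, _, ?_, (hv.seg (Nat.zero_le j) (by omega)).joinE hadj.symm
          (hv.seg (show m ≤ 2 * m by omega) le_rfl) (hv.disj (by omega) le_rfl (by omega)), ?_⟩
        · exact Set.union_subset (hA.img_sub (by omega)) (hA.img_sub (by omega))
        · refine hcovm (Or.inr rfl) ?_ ?_
          · rw [hc j m (by omega) (by omega)]; split_ifs <;> omega
          · intro i hi
            obtain ⟨e, he, hce⟩ := hcyc.seg (show m + m ≤ 2 * m by omega) le_rfl i hi
            exact ⟨e, Or.inl (Or.inr he), hce⟩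
      · refine ⟨_, _, ?_, (hv.seg (Nat.zero_le m) (by omega)).joinE hadj
          (hv.seg hj1 le_rfl) (hv.disj (by omega) le_rfl (by omega)), ?_⟩
        · exact Set.union_subset (hA.img_sub (by omega)) (hA.img_sub (by omega))
        · refine hcovm (Or.inr rfl) ?_ ?_
          · rw [hc m j (by omega) (by omega)]; split_ifs <;> omega
          · intro i hi
            obtain ⟨e, he, hce⟩ := hcyc.seg (show 0 + m ≤ m by omega) (by omega) i hi
            exact ⟨e, Or.inl (Or.inl he), hce⟩

end Base


section Small
variable {V : Type*} {G : SimpleGraph V}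

/-- last entry of a nonempty list `a :: l` -/
def lastL : ℕ → List ℕ → ℕ
  | a, [] => a
  | _, b :: l => lastL b l

/-- consecutive pairs of `a :: l` -/
def edL : ℕ → List ℕ → List (ℕ × ℕ)
  | _, [] => []
  | a, b :: l => (a, b) :: edL b l

theorem list_path {v : ℕ → V} {L : ℕ} (hinj : ∀ i j, i ≤ L → j ≤ L → v i = v j → i = j)
    (hadj : ∀ i j, i ≤ L → j ≤ L → i ≠ j → G.Adj (v i) (v j)) (l : List ℕ) :
    ∀ a, (a :: l).Nodup → (∀ r ∈ a :: l, r ≤ L) →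
    HP G (v a) (v (lastL a l)) {x | ∃ r ∈ a :: l, v r = x}
      {e | ∃ q ∈ edL a l, s(v q.1, v q.2) = e} := by
  induction l with
  | nil =>
    intro a _ _
    refine (HP.single (v a)).mono ?_ ?_
    · ext x; simp [eq_comm]
    · rintro e ⟨q, hq, _⟩; simp [edL] at hq
  | cons b l ih =>
    intro a hnd hL
    have hnd' := List.nodup_cons.1 hnd
    have ha : a ≤ L := hL a (by simp)
    have hb : b ≤ L := hL b (by simp)
    have hab : a ≠ b := by rintro rfl; exact hnd'.1 (by simp)
    have h1 := (HP.single (G := G) (v a)).joinE (hadj a b ha hb hab)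
      (ih b hnd'.2 (fun r hr => hL r (List.mem_cons_of_mem _ hr))) (by
        rintro x rfl ⟨r, hr, hx⟩
        have := hinj r a (hL r (List.mem_cons_of_mem _ hr)) ha hx
        subst this
        exact hnd'.1 hr)
    refine h1.mono ?_ ?_
    · ext x
      constructor
      · rintro (rfl | ⟨r, hr, rfl⟩)
        · exact ⟨a, by simp, rfl⟩
        · exact ⟨r, List.mem_cons_of_mem _ hr, rfl⟩
      · rintro ⟨r, hr, rfl⟩
        rcases List.mem_cons.1 hr with rfl | hr
        · exact Or.inl rfl
        · exact Or.inr ⟨r, hr, rfl⟩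
    · rintro e ⟨q, hq, rfl⟩
      rcases List.mem_cons.1 hq with rfl | hq
      · exact Or.inr rfl
      · exact Or.inl (Or.inr ⟨q, hq, rfl⟩)

/-- colours for four and five vertices (indexed by `5 * i + j`, `i < j`) -/
def colF (i j : ℕ) : ℕ :=
  if i = 0 then (if j = 1 then 0 else if j = 2 then 1 else if j = 3 then 0 else 3)
  else if i = 1 then (if j = 2 then 2 else if j = 3 then 2 else 0)
  else if i = 2 then (if j = 3 then 1 else 3)
  else 0

/-- tails of the rainbow paths on four vertices -/
def tab4 (s g : ℕ) : List ℕ :=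
  if s = 0 then (if g = 1 then [3, 2, 1] else if g = 2 then [1, 3, 2] else [1, 2, 3])
  else if s = 1 then (if g = 2 then [3, 0, 2] else [2, 0, 3])
  else [0, 1, 3]

/-- tails of the rainbow paths on five vertices -/
def tab5 (s g : ℕ) : List ℕ :=
  if s = 0 then (if g = 1 then [4, 3, 2, 1] else if g = 2 then [4, 1, 3, 2]
    else if g = 3 then [4, 1, 2, 3] else [1, 3, 2, 4])
  else if s = 1 then (if g = 2 then [3, 4, 0, 2] else if g = 3 then [2, 0, 4, 3]
    else [2, 3, 0, 4])
  else if s = 2 then (if g = 3 then [0, 4, 1, 3] else [3, 1, 0, 4])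
  else [2, 1, 0, 4]

/-- symmetric colour -/
def colS (i j : ℕ) : ℕ := if i < j then colF i j else colF j i

theorem tab4_ok : ∀ g < 4, ∀ s < g, lastL s (tab4 s g) = g ∧ (s :: tab4 s g).Nodup ∧
    (∀ r ∈ s :: tab4 s g, r ≤ 3) ∧ ∀ i < 3, ∃ q ∈ edL s (tab4 s g), colS q.1 q.2 = i := by
  decide

set_option synthInstance.maxSize 1000 in
set_option synthInstance.maxHeartbeats 200000 in
theorem tab5_ok : ∀ g < 5, ∀ s < g, lastL s (tab5 s g) = g ∧ (s :: tab5 s g).Nodup ∧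
    (∀ r ∈ s :: tab5 s g, r ≤ 4) ∧ (∀ i < 4, ∃ q ∈ edL s (tab5 s g), colS q.1 q.2 = i) ∧
    ((s = 0 ∧ g = 4) ∨ (0, 4) ∈ edL s (tab5 s g) ∨ (4, 0) ∈ edL s (tab5 s g)) := by
  decide

theorem edL_ne {l : List ℕ} : ∀ {a : ℕ}, (a :: l).Nodup → ∀ q ∈ edL a l,
    q.1 ∈ a :: l ∧ q.2 ∈ a :: l ∧ q.1 ≠ q.2 := by
  induction l with
  | nil => intro a _ q hq; simp [edL] at hq
  | cons b l ih =>
    intro a hnd q hq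
    have hnd' := List.nodup_cons.1 hnd
    rcases List.mem_cons.1 hq with rfl | hq
    · refine ⟨by simp, by simp, ?_⟩
      rintro h
      apply hnd'.1
      simp only at h
      rw [h]; simp
    · have := ih hnd'.2 q hq
      exact ⟨List.mem_cons_of_mem _ this.1, List.mem_cons_of_mem _ this.2.1, this.2.2⟩

theorem cov_list {v : ℕ → V} {L : ℕ} {c : Sym2 V → ℕ}
    (hc : ∀ i j, i < j → j ≤ L → c s(v i, v j) = colF i j) {a : ℕ} {l : List ℕ}
    (hnd : (a :: l).Nodup) (hL : ∀ r ∈ a :: l, r ≤ L) {K : ℕ}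
    (h : ∀ i < K, ∃ q ∈ edL a l, colS q.1 q.2 = i) :
    Cov c K {e | ∃ q ∈ edL a l, s(v q.1, v q.2) = e} := by
  intro i hi
  obtain ⟨q, hq, hqi⟩ := h i hi
  refine ⟨_, ⟨q, hq, rfl⟩, ?_⟩
  obtain ⟨h1, h2, h3⟩ := edL_ne hnd q hq
  unfold colS at hqi
  split_ifs at hqi with h4
  · rw [hc _ _ h4 (hL _ h2), hqi]
  · rw [Sym2.eq_swap, hc _ _ (by omega) (hL _ h1), hqi]

theorem k4_full [Finite V] (hV : Nat.card V = 4) (hadj : ∀ a b : V, a ≠ b → G.Adj a b) :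
    FullC G 3 := by
  have hW : (Set.univ : Set V).ncard = 3 + 1 := by rw [Set.ncard_univ, hV]
  obtain ⟨x, y, hxy⟩ : ∃ x y : V, x ≠ y := by
    have : Nontrivial V := by
      rw [← Finite.one_lt_card_iff_nontrivial]; omega
    exact exists_pair_ne V
  obtain ⟨v, hA, _, _⟩ := exists_arr hW (Set.mem_univ x) (Set.mem_univ y) hxy
  obtain ⟨c, hc⟩ := exists_col v 3 hA.1 colF
  have hadj' : ∀ i j, i ≤ 3 → j ≤ 3 → i ≠ j → G.Adj (v i) (v j) := by
    intro i j hi hj hij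
    exact hadj _ _ (fun h => hij (hA.1 i j hi hj h))
  have main : ∀ s g, s < g → g ≤ 3 → ∃ S E, HP G (v s) (v g) S E ∧ Cov c 3 E := by
    intro s g hsg hg
    obtain ⟨h1, h2, h3, h4⟩ := tab4_ok g (by omega) s hsg
    have := list_path hA.1 hadj' (tab4 s g) s h2 h3
    rw [h1] at this
    exact ⟨_, _, this, cov_list hc h2 h3 h4⟩
  refine ⟨c, ?_⟩
  intro a b hab
  obtain ⟨s, hs, rfl⟩ := hA.surj hW a (Set.mem_univ _)
  obtain ⟨g, hg, rfl⟩ := hA.surj hW b (Set.mem_univ _)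
  rcases lt_trichotomy s g with h | h | h
  · exact main s g h hg
  · subst h; exact absurd rfl hab
  · obtain ⟨S, E, g1, g2⟩ := main g s h hs
    exact ⟨S, E, g1.symm, g2⟩

theorem k5_st [Finite V] {W : Set V} (hW : W.ncard = 4 + 1)
    (hadj : ∀ a b : V, a ≠ b → G.Adj a b) {x y : V} (hx : x ∈ W) (hy : y ∈ W) (hxy : x ≠ y) :
    ∃ c, St G W 3 c x y ∅ := by
  obtain ⟨v, hA, rfl, rfl⟩ := exists_arr hW hx hy hxy
  obtain ⟨c, hc⟩ := exists_col v 4 hA.1 colF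
  have hadj' : ∀ i j, i ≤ 4 → j ≤ 4 → i ≠ j → G.Adj (v i) (v j) := by
    intro i j hi hj hij
    exact hadj _ _ (fun h => hij (hA.1 i j hi hj h))
  have hsub : ∀ {l : List ℕ}, (∀ r ∈ l, r ≤ 4) → {x | ∃ r ∈ l, v r = x} ⊆ W := by
    rintro l hl _ ⟨r, hr, rfl⟩
    exact hA.2 r (hl r hr)
  have main : ∀ s g, s < g → g ≤ 4 → ∃ S E, S ⊆ W ∧ HP G (v s) (v g) S E ∧
      (¬ (s = 0 ∧ g = 4) → s(v 0, v 4) ∈ E) ∧ Cov c 4 E := by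
    intro s g hsg hg
    obtain ⟨h1, h2, h3, h4, h5⟩ := tab5_ok g (by omega) s hsg
    have := list_path hA.1 hadj' (tab5 s g) s h2 h3
    rw [h1] at this
    refine ⟨_, _, hsub h3, this, ?_, cov_list hc h2 h3 h4⟩
    intro hne
    rcases h5 with h | h | h
    · exact absurd h hne
    · exact ⟨_, h, rfl⟩
    · exact ⟨_, h, Sym2.eq_swap⟩
  refine ⟨c, hx, hy, hadj _ _ hxy, ?_, ?_, ?_, ?_⟩
  · rw [hc 0 4 (by omega) le_rfl]; rfl
  · intro a ha b hb hab hne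
    obtain ⟨s, hs, rfl⟩ := hA.surj hW a ha
    obtain ⟨g, hg, rfl⟩ := hA.surj hW b hb
    rcases lt_trichotomy s g with h | h | h
    · obtain ⟨S, E, g1, g2, g3, g4⟩ := main s g h hg
      exact ⟨S, E, g1, g2, g3 (by rintro ⟨rfl, rfl⟩; exact hne rfl), g4⟩
    · subst h; exact absurd rfl hab
    · obtain ⟨S, E, g1, g2, g3, g4⟩ := main g s h hs
      exact ⟨S, E, g1, g2.symm, g3 (by rintro ⟨rfl, rfl⟩; exact hne Sym2.eq_swap), g4⟩
  · obtain ⟨S, E, g1, g2, g3, g4⟩ := main 0 4 (by omega) le_rfl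
    exact ⟨S, E, g1, g2, g4⟩
  · intro q hq _ hqx hqy
    obtain ⟨g, hg, rfl⟩ := hA.surj hW q hq
    have hg0 : g ≠ 0 := by rintro rfl; exact hqx rfl
    have hg4 : g ≠ 4 := by rintro rfl; exact hqy rfl
    obtain ⟨h1, h2, h3, h4⟩ := tab4_ok g (by omega) 0 (by omega)
    have h3' : ∀ r ∈ 0 :: tab4 0 g, r ≤ 4 := fun r hr => (h3 r hr).trans (by omega)
    have := list_path hA.1 hadj' (tab4 0 g) 0 h2 h3'
    rw [h1] at this
    refine ⟨_, _, hsub h3', ?_, this, cov_list hc h2 h3' h4⟩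
    rintro ⟨r, hr, hr4⟩
    have := hA.1 r 4 (h3' r hr) le_rfl hr4
    have := h3 r hr
    omega

theorem Wj_compl (w : ℕ → V) (t j : ℕ) :
    (Wj w t j)ᶜ = w '' (Finset.Ioc j t : Set ℕ) := by
  ext x
  constructor
  · intro hx
    by_contra h
    apply hx
    intro i hi hi' hxi
    exact h ⟨i, by simp [hi, hi'], hxi.symm⟩
  · rintro ⟨i, hi, rfl⟩ hx
    simp at hi
    exact hx i hi.1 hi.2 rfl

theorem full_lt [Fintype V] {k : ℕ} (hk : 2 ≤ k) (hn4 : 4 ≤ Fintype.card V)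
    (hn : Fintype.card V < 2 * k)
    (hδ : ∀ v : V, k ≤ (G.neighborSet v).ncard) : FullC G k := by
  classical
  have hkn : k + 1 ≤ Fintype.card V := by
    obtain ⟨a⟩ : Nonempty V := Fintype.card_pos_iff.1 (by omega)
    have h1 := hδ a
    have h2 : (insert a (G.neighborSet a)).ncard = (G.neighborSet a).ncard + 1 :=
      Set.ncard_insert_of_notMem (by simp) (Set.toFinite _)
    have h3 := Set.ncard_le_ncard (Set.subset_univ (insert a (G.neighborSet a))) (Set.toFinite _)
    rw [Set.ncard_univ, Nat.card_eq_fintype_card] at h3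
    omega
  obtain ⟨m, hm⟩ : ∃ m, Fintype.card V = k + m := ⟨Fintype.card V - k, by omega⟩
  obtain ⟨t, ht⟩ : ∃ t, k = m + t := ⟨k - m, by omega⟩
  obtain ⟨w, hinj, w1, w2⟩ := exists_squared (t := t) (by omega) hkn (by omega) hδ
  have hcc : ∀ j, j ≤ t → (Wj w t j)ᶜ.ncard = t - j := by
    intro j hj
    rw [Wj_compl, Set.InjOn.ncard_image, Set.ncard_coe_finset, Nat.card_Ioc]
    intro a ha b hb hab
    simp at ha hb
    exact hinj a b ha.2 hb.2 hab
  have hWc : ∀ j, j ≤ t → (Wj w t j).ncard = Fintype.card V - (t - j) := by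
    intro j hj
    have := Set.ncard_add_ncard_compl (Wj w t j)
    rw [hcc j hj, Nat.card_eq_fintype_card] at this
    omega
  have hmemW : ∀ i j, i ≤ j → j ≤ t → w i ∈ Wj w t j := by
    intro i j hij hj r hr hr' h
    have := hinj i r (by omega) hr' h
    omega
  by_cases hm2 : 2 ≤ m
  · have hW1 : (Wj w t 1).ncard = 2 * m + 1 := by rw [hWc 1 (by omega)]; omega
    have hdeg : ∀ a ∈ Wj w t 1, m + 1 ≤ (G.neighborSet a ∩ Wj w t 1).ncard := by
      intro a _
      have h1 := hδ a
      have h2 := Set.ncard_le_ncard (s := G.neighborSet a)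
        (t := (G.neighborSet a ∩ Wj w t 1) ∪ (Wj w t 1)ᶜ) (by
          intro x hx
          by_cases h : x ∈ Wj w t 1
          · exact Or.inl ⟨hx, h⟩
          · exact Or.inr h) (Set.toFinite _)
      have h3 := Set.ncard_union_le (G.neighborSet a ∩ Wj w t 1) (Wj w t 1)ᶜ
      rw [hcc 1 (by omega)] at h3
      omega
    obtain ⟨v, hA, hv, hv0, hv1⟩ := exists_ham (by omega) hW1 hdeg (hmemW 0 1 (by omega) (by omega))
      (hmemW 1 1 (by omega) (by omega)) (w1 0 (by omega)).ne
    obtain ⟨c, Bad, hBad, hst⟩ := base_st hm2 hv hA hW1 hdeg (by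
      rw [hv0, hv1]; exact w1 0 (by omega))
    rw [hv0, hv1] at hst
    exact climb_full (j0 := 1) ht (by omega) le_rfl (by omega) (by omega) hδ hinj w1 w2 hBad hst
  · have hm1 : m = 1 := by omega
    subst hm1
    have hadj : ∀ a b : V, a ≠ b → G.Adj a b := by
      intro a b hab
      by_contra hno
      have h1 := hδ a
      have h2 := Set.ncard_le_ncard (s := G.neighborSet a) (t := ({a, b} : Set V)ᶜ) (by
        rintro x hx (rfl | rfl)
        · exact hx.ne rfl
        · exact hno hx) (Set.toFinite _)
      have h3 := Set.ncard_add_ncard_compl ({a, b} : Set V)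
      rw [Set.ncard_pair hab, Nat.card_eq_fintype_card] at h3
      omega
    by_cases h4 : Fintype.card V = 4
    · have : k = 3 := by omega
      subst this
      exact k4_full (by rw [Nat.card_eq_fintype_card, h4]) hadj
    · obtain ⟨c, hst⟩ := k5_st (W := Wj w t 3) (by rw [hWc 3 (by omega)]; omega) hadj
        (hmemW 2 3 (by omega) (by omega)) (hmemW 3 3 (by omega) (by omega)) (w1 2 (by omega)).ne
      exact climb_full (j0 := 3) (Bad := ∅) ht le_rfl (by omega) (by omega) (by omega) hδ hinj w1 w2
        (by simp) hst

end Small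

theorem stmt_11 {V : Type*} [Fintype V] (G : SimpleGraph V) (k : ℕ) (hk : 2 ≤ k)
    (hn : 4 ≤ Fintype.card V) (hG : G.IsTwoConnected)
    (hδ : ∀ v : V, k ≤ (G.neighborSet v).ncard) :
    G.KColorConnectable k ∧ G.ccConn k = k := by
  have hV : ∃ u v : V, u ≠ v := by
    have : Nontrivial V := Fintype.one_lt_card_iff_nontrivial.1 (by omega)
    exact exists_pair_ne V
  apply reduction k hk hV
  by_cases h : 2 * k ≤ Fintype.card V
  · exact dirac_full (TC.of hG) hk h hδ
  · exact full_lt hk hn (by omega) hδ
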